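/- For every distortion pair (d1,d2) ∈ ℝ₊², the rate-distortion function is sandwiched between the cut-set lower bound and the compress-linear upper bound: max{ R_{X|Y}(d1), R_{Y|X}(d2) } ≤ R(d1,d2) ≤ max{ R^{WZ}_{X|Y}(d1), R^{WZ}_{Y|X}(d2) }. -/

import Mathlib

open scoped BigOperators Classical

noncomputable section

namespace TWR

/-- Base-2 Shannon entropy of a finitely supported distribution (with the
convention `0 * log 0 = 0`, automatic since `Real.logb 2 0 = 0`). -/
def H2 {α : Type} [Fintype α] (p : α → ℝ) : ℝ :=
  -∑ a, p a * Real.logb 2 (p a)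

/-- `p` is a probability mass function. -/
def IsPmf {α : Type} [Fintype α] (p : α → ℝ) : Prop :=
  (∀ a, 0 ≤ p a) ∧ ∑ a, p a = 1

/-- `W` is a conditional pmf. -/
def IsCondPmf {α β : Type} [Fintype β] (W : α → β → ℝ) : Prop :=
  ∀ a, IsPmf (W a)

/-- Mutual information `I(A;B)` (base 2) of a joint pmf on `α × β`. -/
def MI {α β : Type} [Fintype α] [Fintype β] (p : α × β → ℝ) : ℝ :=
  H2 (fun a => ∑ b, p (a, b)) + H2 (fun b => ∑ a, p (a, b)) - H2 p

/-- Conditional entropy `H(A|B)` of a joint pmf on `α × β`. -/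
def condH {α β : Type} [Fintype α] [Fintype β] (p : α × β → ℝ) : ℝ :=
  H2 p - H2 (fun b => ∑ a, p (a, b))

/-- Conditional mutual information `I(A;C|B)` of a joint pmf on `α × β × γ`,
conditioning on the middle coordinate (`I(A;C|B) = H(A,B)+H(B,C)-H(A,B,C)-H(B)`). -/
def condMI {α β γ : Type} [Fintype α] [Fintype β] [Fintype γ] (p : α × β × γ → ℝ) : ℝ :=
  H2 (fun ab : α × β => ∑ c, p (ab.1, ab.2, c)) +
    H2 (fun bc : β × γ => ∑ a, p (a, bc.1, bc.2)) -
    H2 p - H2 (fun b : β => ∑ a, ∑ c, p (a, b, c))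

/-- Markov chain `A − B − C` for a joint pmf on `α × β × γ`. -/
def Markov {α β γ : Type} [Fintype α] [Fintype β] [Fintype γ] (p : α × β × γ → ℝ) : Prop :=
  ∀ a b c, p (a, b, c) * (∑ a', ∑ c', p (a', b, c')) =
    (∑ c', p (a, b, c')) * (∑ a', p (a', b, c))

variable {𝒳 𝒴 Xh Yh 𝒲 𝒰 𝒱 : Type}
variable [Fintype 𝒳] [Fintype 𝒴] [Fintype Xh] [Fintype Yh]
variable [Fintype 𝒲] [Fintype 𝒰] [Fintype 𝒱]

/-- The i.i.d. block source. -/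
def iid (q : 𝒳 × 𝒴 → ℝ) (n : ℕ) : (Fin n → 𝒳) × (Fin n → 𝒴) → ℝ :=
  fun xy => ∏ i, q (xy.1 i, xy.2 i)

/-- Average distortion at receiver 1 of the RD code `(f, g1, ·)`. -/
def Delta1 (q : 𝒳 × 𝒴 → ℝ) (δ1 : 𝒳 → Xh → ℝ) {n m : ℕ}
    (f : (Fin n → 𝒳) × (Fin n → 𝒴) → Fin m)
    (g1 : Fin m × (Fin n → 𝒴) → Fin n → Xh) : ℝ :=
  ∑ xy : (Fin n → 𝒳) × (Fin n → 𝒴),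
    iid q n xy * ((n : ℝ)⁻¹ * ∑ i, δ1 (xy.1 i) (g1 (f xy, xy.2) i))

/-- Average distortion at receiver 2 of the RD code `(f, ·, g2)`. -/
def Delta2 (q : 𝒳 × 𝒴 → ℝ) (δ2 : 𝒴 → Yh → ℝ) {n m : ℕ}
    (f : (Fin n → 𝒳) × (Fin n → 𝒴) → Fin m)
    (g2 : Fin m × (Fin n → 𝒳) → Fin n → Yh) : ℝ :=
  ∑ xy : (Fin n → 𝒳) × (Fin n → 𝒴),
    iid q n xy * ((n : ℝ)⁻¹ * ∑ i, δ2 (xy.2 i) (g2 (f xy, xy.1) i))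

/-- `r` is a `(d1,d2)`-achievable rate (source coding). -/
def RDAchievable (q : 𝒳 × 𝒴 → ℝ) (δ1 : 𝒳 → Xh → ℝ) (δ2 : 𝒴 → Yh → ℝ)
    (d1 d2 r : ℝ) : Prop :=
  ∀ ε > (0 : ℝ), ∃ (n m : ℕ) (f : (Fin n → 𝒳) × (Fin n → 𝒴) → Fin m)
    (g1 : Fin m × (Fin n → 𝒴) → Fin n → Xh)
    (g2 : Fin m × (Fin n → 𝒳) → Fin n → Yh),
    0 < n ∧ Real.logb 2 m / n ≤ r + ε ∧
    Delta1 q δ1 f g1 ≤ d1 + ε ∧ Delta2 q δ2 f g2 ≤ d2 + ε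

/-- The rate-distortion function `R(d1,d2)`. -/
def RD (q : 𝒳 × 𝒴 → ℝ) (δ1 : 𝒳 → Xh → ℝ) (δ2 : 𝒴 → Yh → ℝ) (d1 d2 : ℝ) : ℝ :=
  sInf {r : ℝ | 0 ≤ r ∧ RDAchievable q δ1 δ2 d1 d2 r}

/-- `r` is `(d1,d2)`-achievable with common reconstructions. -/
def CRAchievable (q : 𝒳 × 𝒴 → ℝ) (δ1 : 𝒳 → Xh → ℝ) (δ2 : 𝒴 → Yh → ℝ)
    (d1 d2 r : ℝ) : Prop :=
  ∀ ε > (0 : ℝ), ∃ (n m : ℕ) (f : (Fin n → 𝒳) × (Fin n → 𝒴) → Fin m)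
    (g1 : Fin m × (Fin n → 𝒴) → Fin n → Xh)
    (g2 : Fin m × (Fin n → 𝒳) → Fin n → Yh)
    (φ1 : Fin m × (Fin n → 𝒴) → Fin n → Yh)
    (φ2 : Fin m × (Fin n → 𝒳) → Fin n → Xh),
    0 < n ∧ Real.logb 2 m / n ≤ r + ε ∧
    Delta1 q δ1 f g1 ≤ d1 + ε ∧ Delta2 q δ2 f g2 ≤ d2 + ε ∧
    (∑ xy : (Fin n → 𝒳) × (Fin n → 𝒴),
      if φ2 (f xy, xy.1) = g1 (f xy, xy.2) then 0 else iid q n xy) ≤ ε ∧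
    (∑ xy : (Fin n → 𝒳) × (Fin n → 𝒴),
      if φ1 (f xy, xy.2) = g2 (f xy, xy.1) then 0 else iid q n xy) ≤ ε

/-- The common-reconstruction rate-distortion function `R_CR(d1,d2)`. -/
def CRRD (q : 𝒳 × 𝒴 → ℝ) (δ1 : 𝒳 → Xh → ℝ) (δ2 : 𝒴 → Yh → ℝ) (d1 d2 : ℝ) : ℝ :=
  sInf {r : ℝ | 0 ≤ r ∧ CRAchievable q δ1 δ2 d1 d2 r}

/-- The conditional rate-distortion function `R_{X|Y}(d1)`. -/
def condRD (q : 𝒳 × 𝒴 → ℝ) (δ1 : 𝒳 → Xh → ℝ) (d1 : ℝ) : ℝ :=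
  sInf {r : ℝ | ∃ W : 𝒳 × 𝒴 → Xh → ℝ, IsCondPmf W ∧
    (∑ x, ∑ y, ∑ xh, q (x, y) * W (x, y) xh * δ1 x xh) ≤ d1 ∧
    r = condMI (fun t : 𝒳 × 𝒴 × Xh => q (t.1, t.2.1) * W (t.1, t.2.1) t.2.2)}

/-- Swap the two components of a joint source. -/
def swap (q : 𝒳 × 𝒴 → ℝ) : 𝒴 × 𝒳 → ℝ := fun t => q (t.2, t.1)

/-- The marginal rate-distortion function `R_X(d)`. -/
def margRD (qX : 𝒳 → ℝ) (δ1 : 𝒳 → Xh → ℝ) (d1 : ℝ) : ℝ :=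
  sInf {r : ℝ | ∃ W : 𝒳 → Xh → ℝ, IsCondPmf W ∧
    (∑ x, ∑ xh, qX x * W x xh * δ1 x xh) ≤ d1 ∧
    r = MI (fun t : 𝒳 × Xh => qX t.1 * W t.1 t.2)}

def margX (q : 𝒳 × 𝒴 → ℝ) : 𝒳 → ℝ := fun x => ∑ y, q (x, y)
def margY (q : 𝒳 × 𝒴 → ℝ) : 𝒴 → ℝ := fun y => ∑ x, q (x, y)

/-- The joint rate-distortion function `R_{XY}(d1,d2)`. -/
def jointRD (q : 𝒳 × 𝒴 → ℝ) (δ1 : 𝒳 → Xh → ℝ) (δ2 : 𝒴 → Yh → ℝ) (d1 d2 : ℝ) : ℝ :=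
  sInf {r : ℝ | ∃ W : 𝒳 × 𝒴 → Xh × Yh → ℝ, IsCondPmf W ∧
    (∑ xy : 𝒳 × 𝒴, ∑ z : Xh × Yh, q xy * W xy z * δ1 xy.1 z.1) ≤ d1 ∧
    (∑ xy : 𝒳 × 𝒴, ∑ z : Xh × Yh, q xy * W xy z * δ2 xy.2 z.2) ≤ d2 ∧
    r = MI (fun t : (𝒳 × 𝒴) × (Xh × Yh) => q t.1 * W t.1 t.2)}

/-- The Wyner–Ziv rate-distortion function `R^{WZ}_{X|Y}(d1)`
(with auxiliary alphabet of cardinality `|𝒳| + 1`). -/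
def wzRD (q : 𝒳 × 𝒴 → ℝ) (δ1 : 𝒳 → Xh → ℝ) (d1 : ℝ) : ℝ :=
  sInf {r : ℝ | ∃ p : Fin (Fintype.card 𝒳 + 1) × 𝒳 × 𝒴 → ℝ, IsPmf p ∧
    (∀ x y, (∑ a, p (a, x, y)) = q (x, y)) ∧ Markov p ∧
    (∃ π1 : Fin (Fintype.card 𝒳 + 1) × 𝒴 → Xh,
      (∑ a, ∑ x, ∑ y, p (a, x, y) * δ1 x (π1 (a, y))) ≤ d1) ∧
    r = condMI (fun t : 𝒳 × 𝒴 × Fin (Fintype.card 𝒳 + 1) => p (t.2.2, t.1, t.2.1))}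

/-- The set over which the single-letter CR formula
`max{I(X;X̂,Ŷ|Y), I(Y;X̂,Ŷ|X)}` is minimised. -/
def crFormulaSet (q : 𝒳 × 𝒴 → ℝ) (δ1 : 𝒳 → Xh → ℝ) (δ2 : 𝒴 → Yh → ℝ)
    (d1 d2 : ℝ) : Set ℝ :=
  {r : ℝ | ∃ W : 𝒳 × 𝒴 → Xh × Yh → ℝ, IsCondPmf W ∧
    (∑ x, ∑ y, ∑ z : Xh × Yh, q (x, y) * W (x, y) z * δ1 x z.1) ≤ d1 ∧
    (∑ x, ∑ y, ∑ z : Xh × Yh, q (x, y) * W (x, y) z * δ2 y z.2) ≤ d2 ∧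
    r = max
      (condMI (fun t : 𝒳 × 𝒴 × (Xh × Yh) => q (t.1, t.2.1) * W (t.1, t.2.1) t.2.2))
      (condMI (fun t : 𝒴 × 𝒳 × (Xh × Yh) => q (t.2.1, t.1) * W (t.2.1, t.1) t.2.2))}

/-- Joint law of source blocks and channel outputs for a JSC encoder. -/
def jscP (q : 𝒳 × 𝒴 → ℝ) (qUV : 𝒲 → 𝒰 × 𝒱 → ℝ) {n m : ℕ}
    (f : (Fin n → 𝒳) × (Fin n → 𝒴) → Fin m → 𝒲)
    (x : Fin n → 𝒳) (y : Fin n → 𝒴) (u : Fin m → 𝒰) (v : Fin m → 𝒱) : ℝ :=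
  (∏ i, q (x i, y i)) * ∏ j, qUV (f (x, y) j) (u j, v j)

/-- `(d1,d2)` is achievable by joint source-channel coding with source rate `κs`
and channel rate `κc` (bandwidth expansion `κc/κs`). -/
def JSCAchievable (q : 𝒳 × 𝒴 → ℝ) (qUV : 𝒲 → 𝒰 × 𝒱 → ℝ)
    (δ1 : 𝒳 → Xh → ℝ) (δ2 : 𝒴 → Yh → ℝ) (κs κc d1 d2 : ℝ) : Prop :=
  ∀ ε > (0 : ℝ), ∃ (t n m : ℕ) (f : (Fin n → 𝒳) × (Fin n → 𝒴) → Fin m → 𝒲)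
    (g1 : (Fin m → 𝒰) × (Fin n → 𝒴) → Fin n → Xh)
    (g2 : (Fin m → 𝒱) × (Fin n → 𝒳) → Fin n → Yh),
    0 < t ∧ (n : ℝ) = κs * t ∧ (m : ℝ) = κc * t ∧
    (∑ x : Fin n → 𝒳, ∑ y : Fin n → 𝒴, ∑ u : Fin m → 𝒰, ∑ v : Fin m → 𝒱,
      jscP q qUV f x y u v * ((n : ℝ)⁻¹ * ∑ i, δ1 (x i) (g1 (u, y) i))) ≤ d1 + ε ∧
    (∑ x : Fin n → 𝒳, ∑ y : Fin n → 𝒴, ∑ u : Fin m → 𝒰, ∑ v : Fin m → 𝒱,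
      jscP q qUV f x y u v * ((n : ℝ)⁻¹ * ∑ i, δ2 (y i) (g2 (v, x) i))) ≤ d2 + ε

/-- `(d1,d2)` is achievable by joint source-channel coding with common
reconstructions, source rate `κs` and channel rate `κc`. -/
def CRJSCAchievable (q : 𝒳 × 𝒴 → ℝ) (qUV : 𝒲 → 𝒰 × 𝒱 → ℝ)
    (δ1 : 𝒳 → Xh → ℝ) (δ2 : 𝒴 → Yh → ℝ) (κs κc d1 d2 : ℝ) : Prop :=
  ∀ ε > (0 : ℝ), ∃ (t n m : ℕ) (f : (Fin n → 𝒳) × (Fin n → 𝒴) → Fin m → 𝒲)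
    (g1 : (Fin m → 𝒰) × (Fin n → 𝒴) → Fin n → Xh)
    (g2 : (Fin m → 𝒱) × (Fin n → 𝒳) → Fin n → Yh)
    (φ1 : (Fin m → 𝒰) × (Fin n → 𝒴) → Fin n → Yh)
    (φ2 : (Fin m → 𝒱) × (Fin n → 𝒳) → Fin n → Xh),
    0 < t ∧ (n : ℝ) = κs * t ∧ (m : ℝ) = κc * t ∧
    (∑ x : Fin n → 𝒳, ∑ y : Fin n → 𝒴, ∑ u : Fin m → 𝒰, ∑ v : Fin m → 𝒱,
      jscP q qUV f x y u v * ((n : ℝ)⁻¹ * ∑ i, δ1 (x i) (g1 (u, y) i))) ≤ d1 + ε ∧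
    (∑ x : Fin n → 𝒳, ∑ y : Fin n → 𝒴, ∑ u : Fin m → 𝒰, ∑ v : Fin m → 𝒱,
      jscP q qUV f x y u v * ((n : ℝ)⁻¹ * ∑ i, δ2 (y i) (g2 (v, x) i))) ≤ d2 + ε ∧
    (∑ x : Fin n → 𝒳, ∑ y : Fin n → 𝒴, ∑ u : Fin m → 𝒰, ∑ v : Fin m → 𝒱,
      if φ2 (v, x) = g1 (u, y) then 0 else jscP q qUV f x y u v) ≤ ε ∧
    (∑ x : Fin n → 𝒳, ∑ y : Fin n → 𝒴, ∑ u : Fin m → 𝒰, ∑ v : Fin m → 𝒱,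
      if φ1 (u, y) = g2 (v, x) then 0 else jscP q qUV f x y u v) ≤ ε

/-- `I(W;U)` under the joint law `pW · qUV` (U-marginal of the broadcast channel). -/
def chMIU (qUV : 𝒲 → 𝒰 × 𝒱 → ℝ) (pW : 𝒲 → ℝ) : ℝ :=
  MI (fun t : 𝒲 × 𝒰 => pW t.1 * ∑ v, qUV t.1 (t.2, v))

/-- `I(W;V)` under the joint law `pW · qUV` (V-marginal of the broadcast channel). -/
def chMIV (qUV : 𝒲 → 𝒰 × 𝒱 → ℝ) (pW : 𝒲 → ℝ) : ℝ :=
  MI (fun t : 𝒲 × 𝒱 => pW t.1 * ∑ u, qUV t.1 (u, t.2))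

/-- The doubly symmetric binary source with crossover probability `ρ`. -/
def dsbs (ρ : ℝ) : Bool × Bool → ℝ :=
  fun t => if t.1 = t.2 then (1 - ρ) / 2 else ρ / 2

/-- The Hamming distortion measure. -/
def dHam {α : Type} : α → α → ℝ := fun a b => if a = b then 0 else 1

/-- The binary entropy function (base 2). -/
def binEnt (x : ℝ) : ℝ := -(x * Real.logb 2 x) - (1 - x) * Real.logb 2 (1 - x)

/-- A difference distortion measure built from a per-letter function of the
(modular) difference. -/
def diffD {l : ℕ} (δ : Fin l → ℝ) : Fin l → Fin l → ℝ := fun a b => δ (a - b)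

/-- Capacity of the modulo-additive channel with noise `pN` and input
distortion constraint `d`. -/
def Cadd {l : ℕ} (δ : Fin l → ℝ) (d : ℝ) (pN : Fin l → ℝ) : ℝ :=
  sSup {r : ℝ | ∃ pW : Fin l → ℝ, IsPmf pW ∧ (∑ w, pW w * δ w) ≤ d ∧
    r = MI (fun t : Fin l × Fin l => pW t.1 * pN (t.2 - t.1))}

/-- The minimax (worst-noise) capacity under distortion constraint `d`. -/
def Cworst {l : ℕ} (δ : Fin l → ℝ) (d : ℝ) : ℝ :=
  sInf {r : ℝ | ∃ pN : Fin l → ℝ, IsPmf pN ∧ (∑ x, pN x * δ x) ≤ d ∧ r = Cadd δ d pN}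

/-- Wyner's common information `K(X;Y)` (auxiliary alphabet of size 4). -/
def wynerK (q : 𝒳 × 𝒴 → ℝ) : ℝ :=
  sInf {r : ℝ | ∃ W : 𝒳 × 𝒴 → Fin 4 → ℝ, IsCondPmf W ∧
    Markov (fun t : 𝒳 × Fin 4 × 𝒴 => q (t.1, t.2.2) * W (t.1, t.2.2) t.2.1) ∧
    r = MI (fun t : (𝒳 × 𝒴) × Fin 4 => q t.1 * W t.1 t.2)}

/-- The one-description (Kimura–Uyematsu) upper bound `R_U*(d1,d2)`. -/
def oneDescUB (q : 𝒳 × 𝒴 → ℝ) (δ1 : 𝒳 → Xh → ℝ) (δ2 : 𝒴 → Yh → ℝ) (d1 d2 : ℝ) : ℝ :=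
  sInf {r : ℝ | ∃ W : 𝒳 × 𝒴 → Fin (Fintype.card 𝒳 * Fintype.card 𝒴 + 2) → ℝ,
    IsCondPmf W ∧
    (∃ π1 : Fin (Fintype.card 𝒳 * Fintype.card 𝒴 + 2) × 𝒴 → Xh,
      (∑ x, ∑ y, ∑ c, q (x, y) * W (x, y) c * δ1 x (π1 (c, y))) ≤ d1) ∧
    (∃ π2 : Fin (Fintype.card 𝒳 * Fintype.card 𝒴 + 2) × 𝒳 → Yh,
      (∑ x, ∑ y, ∑ c, q (x, y) * W (x, y) c * δ2 y (π2 (c, x))) ≤ d2) ∧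
    r = max
      (condMI (fun t : 𝒳 × 𝒴 × Fin (Fintype.card 𝒳 * Fintype.card 𝒴 + 2) =>
        q (t.1, t.2.1) * W (t.1, t.2.1) t.2.2))
      (condMI (fun t : 𝒴 × 𝒳 × Fin (Fintype.card 𝒳 * Fintype.card 𝒴 + 2) =>
        q (t.2.1, t.1) * W (t.2.1, t.1) t.2.2))}

end TWR

/-!
**Lower bound.** A genie giving receiver 2 everything leaves a code for `X` with side information
`Y` at both ends. Average the law of `(Xᵢ, Yᵢ, X̂ᵢ)` over a uniform position `i`; its conditional
mutual information is the mean of the per-letter average of `log (p(x,x̂|y) / (p(x|y) p(x̂|y)))`.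
For each fixed message and block `y`, the product of these ratios along the block has mean at most
one over `X`, so its mean under the code is at most the number of messages, and Jensen's inequality
bounds the mutual information by the rate. Compactness of the set of kernels removes the `ε`.

**Upper bound.** Each of the two Wyner–Ziv rates is achieved by random covering followed by random
binning. The broadcast message is the sum, modulo the common number of messages, of the two bin
indices: each receiver recomputes the index of its own source and subtracts it. So the larger of
the two rates suffices.
-/

namespace TWR

section Expectation

variable {Ω Θ ι : Type} [Fintype Ω] [Fintype Θ] {p f g : Ω → ℝ} {E F : Set Ω}

/-- The expectation of `f` under the law `p`. -/
def mean (p f : Ω → ℝ) : ℝ := ∑ ω, p ω * f ω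

/-- The probability of the event `E` under the law `p`. -/
def prob (p : Ω → ℝ) (E : Set Ω) : ℝ := mean p (E.indicator 1)

lemma mean_add (p f g : Ω → ℝ) : mean p (fun ω => f ω + g ω) = mean p f + mean p g := by
  simp only [mean, mul_add, Finset.sum_add_distrib]

lemma mean_sub (p f g : Ω → ℝ) : mean p (fun ω => f ω - g ω) = mean p f - mean p g := by
  simp only [mean, mul_sub, Finset.sum_sub_distrib]

lemma mean_const_mul (p : Ω → ℝ) (c : ℝ) (f : Ω → ℝ) :
    mean p (fun ω => c * f ω) = c * mean p f := by
  simp only [mean, Finset.mul_sum, mul_left_comm]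

lemma mean_sum (p : Ω → ℝ) (s : Finset ι) (f : ι → Ω → ℝ) :
    mean p (fun ω => ∑ i ∈ s, f i ω) = ∑ i ∈ s, mean p (f i) := by
  simp only [mean, Finset.mul_sum]
  exact Finset.sum_comm

lemma mean_comm (p : Ω → ℝ) (r : Θ → ℝ) (f : Ω → Θ → ℝ) :
    mean p (fun ω => mean r (f ω)) = mean r (fun θ => mean p (fun ω => f ω θ)) := by
  simp only [mean, Finset.mul_sum]
  rw [Finset.sum_comm]
  simp only [mul_left_comm]

lemma mean_comp_equiv (e : Ω ≃ Θ) (p f : Θ → ℝ) : mean (p ∘ e) (f ∘ e) = mean p f :=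
  e.sum_comp fun θ => p θ * f θ

lemma IsPmf.mean_const (hp : IsPmf p) (c : ℝ) : mean p (fun _ => c) = c := by
  rw [mean, ← Finset.sum_mul, hp.2, one_mul]

lemma IsPmf.nonempty (hp : IsPmf p) : Nonempty Ω := by
  by_contra h
  rw [not_nonempty_iff] at h
  simpa using hp.2

lemma IsPmf.comp_equiv {p : Θ → ℝ} (hp : IsPmf p) (e : Ω ≃ Θ) : IsPmf (p ∘ e) :=
  ⟨fun ω => hp.1 (e ω), (e.sum_comp p).trans hp.2⟩

lemma mean_congr (hp : ∀ ω, 0 ≤ p ω) (h : ∀ ω, 0 < p ω → f ω = g ω) : mean p f = mean p g :=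
  Finset.sum_congr rfl fun ω _ => by
    rcases (hp ω).eq_or_lt with h0 | h0
    · rw [← h0, zero_mul, zero_mul]
    · rw [h ω h0]

lemma mean_le_mean (hp : ∀ ω, 0 ≤ p ω) (h : ∀ ω, 0 < p ω → f ω ≤ g ω) :
    mean p f ≤ mean p g :=
  Finset.sum_le_sum fun ω _ => by
    rcases (hp ω).eq_or_lt with h0 | h0
    · rw [← h0, zero_mul, zero_mul]
    · exact mul_le_mul_of_nonneg_left (h ω h0) h0.le

lemma mean_nonneg (hp : ∀ ω, 0 ≤ p ω) (hf : ∀ ω, 0 ≤ f ω) : 0 ≤ mean p f :=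
  Finset.sum_nonneg fun ω _ => mul_nonneg (hp ω) (hf ω)

lemma IsPmf.exists_le_of_mean_le (hp : IsPmf p) {c : ℝ} (h : mean p f ≤ c) :
    ∃ ω, f ω ≤ c := by
  by_contra! hlt
  have hpos : 0 < mean p (fun ω => f ω - c) := by
    obtain ⟨ω, -, hω⟩ := Finset.exists_ne_zero_of_sum_ne_zero (hp.2.trans_ne one_ne_zero)
    exact Finset.sum_pos' (fun ω _ => mul_nonneg (hp.1 ω) (sub_nonneg.2 (hlt ω).le))
      ⟨ω, Finset.mem_univ ω, mul_pos ((hp.1 ω).lt_of_ne' hω) (sub_pos.2 (hlt ω))⟩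
  rw [mean_sub, hp.mean_const] at hpos
  linarith

-- Jensen's inequality, through the tangent line of the logarithm at `M`.
lemma IsPmf.mean_logb_le (hp : IsPmf p) {M : ℝ} (hf : ∀ ω, 0 < p ω → 0 < f ω)
    (hM : 0 < M) (h : mean p f ≤ M) : mean p (fun ω => Real.logb 2 (f ω)) ≤ Real.logb 2 M := by
  have : 0 < Real.log 2 := Real.log_pos one_lt_two
  have tangent : ∀ ω, 0 < p ω →
      Real.logb 2 (f ω) ≤ (Real.log M - 1) / Real.log 2 + (M * Real.log 2)⁻¹ * f ω := by
    intro ω hω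
    have hle := Real.log_le_sub_one_of_pos (div_pos (hf ω hω) hM)
    rw [Real.log_div (hf ω hω).ne' hM.ne'] at hle
    rw [Real.logb, mul_inv, mul_right_comm, ← div_eq_mul_inv, ← add_div, mul_comm,
      ← div_eq_mul_inv]
    gcongr
    linarith
  calc mean p (fun ω => Real.logb 2 (f ω))
      ≤ mean p (fun ω => (Real.log M - 1) / Real.log 2 + (M * Real.log 2)⁻¹ * f ω) :=
        mean_le_mean hp.1 tangent
    _ = (Real.log M - 1) / Real.log 2 + (M * Real.log 2)⁻¹ * mean p f := by
        rw [mean_add, hp.mean_const, mean_const_mul]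
    _ ≤ (Real.log M - 1) / Real.log 2 + (M * Real.log 2)⁻¹ * M := by gcongr
    _ = Real.logb 2 M := by rw [Real.logb]; field_simp; ring

lemma prob_nonneg (hp : ∀ ω, 0 ≤ p ω) (E : Set Ω) : 0 ≤ prob p E :=
  mean_nonneg hp fun _ => Set.indicator_nonneg (fun _ _ => zero_le_one) _

lemma prob_mono (hp : ∀ ω, 0 ≤ p ω) (h : ∀ ω, 0 < p ω → ω ∈ E → ω ∈ F) :
    prob p E ≤ prob p F :=
  mean_le_mean hp fun ω hω => by
    by_cases hE : ω ∈ E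
    · rw [Set.indicator_of_mem hE, Set.indicator_of_mem (h ω hω hE)]
    · rw [Set.indicator_of_notMem hE]
      exact Set.indicator_nonneg (fun _ _ => zero_le_one) _

lemma prob_union_le (hp : ∀ ω, 0 ≤ p ω) (E F : Set Ω) :
    prob p (E ∪ F) ≤ prob p E + prob p F := by
  rw [prob, prob, prob, ← mean_add]
  refine mean_le_mean hp fun ω _ => ?_
  by_cases hE : ω ∈ E <;> by_cases hF : ω ∈ F <;> simp [hE, hF]

lemma IsPmf.prob_le_one (hp : IsPmf p) (E : Set Ω) : prob p E ≤ 1 :=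
  (mean_le_mean hp.1 fun ω _ => Set.indicator_le_self' (fun _ _ => zero_le_one) ω).trans_eq
    (hp.mean_const 1)

lemma IsPmf.prob_compl (hp : IsPmf p) (E : Set Ω) : prob p Eᶜ = 1 - prob p E := by
  rw [prob, prob, Set.indicator_compl, ← hp.mean_const 1, ← mean_sub]
  rfl

lemma prob_comp_equiv (e : Ω ≃ Θ) (p : Θ → ℝ) (E : Set Θ) :
    prob (p ∘ e) (e ⁻¹' E) = prob p E :=
  mean_comp_equiv e p (E.indicator 1)

lemma prob_le_mean_div (hp : ∀ ω, 0 ≤ p ω) (hf : ∀ ω, 0 ≤ f ω) {c : ℝ} (hc : 0 < c) :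
    prob p {ω | c ≤ f ω} ≤ mean p f / c := by
  rw [le_div_iff₀' hc, prob, ← mean_const_mul]
  refine mean_le_mean hp fun ω _ => ?_
  by_cases h : c ≤ f ω <;> simp [h, hf ω]

lemma IsPmf.mean_le_add_mul_prob (hp : IsPmf p) {c b : ℝ} (hE : ∀ ω ∈ E, f ω ≤ c + b)
    (hEc : ∀ ω ∉ E, f ω ≤ c) : mean p f ≤ c + b * prob p E := by
  rw [prob, ← mean_const_mul]
  nth_rw 1 [← hp.mean_const c]
  rw [← mean_add]
  refine mean_le_mean hp.1 fun ω _ => ?_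
  by_cases h : ω ∈ E
  · simpa [h] using hE ω h
  · simpa [h] using hEc ω h

end Expectation

section Laws

variable {S A Z ι : Type} [Fintype S] [Fintype A] [Fintype Z] [Fintype ι] [DecidableEq ι]

/-- The joint law of a letter `s` drawn from `q` and of a letter drawn from `W s`. -/
def jointLaw (q : S → ℝ) (W : S → A → ℝ) : S × A → ℝ := fun z => q z.1 * W z.1 z.2

/-- The law of a family of independent letters, each of law `p`. -/
def iidLaw (p : Z → ℝ) (ι : Type) [Fintype ι] : (ι → Z) → ℝ := fun z => ∏ i, p (z i)

omit [Fintype A] in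
lemma single_one_nonneg [DecidableEq A] (a b : A) : 0 ≤ (Pi.single a 1 : A → ℝ) b :=
  Pi.single_nonneg (α := fun _ => ℝ).2 zero_le_one b

lemma isPmf_single [DecidableEq A] (a : A) : IsPmf (Pi.single a 1 : A → ℝ) :=
  ⟨single_one_nonneg a, Fintype.sum_pi_single' a 1⟩

lemma mean_single_left [DecidableEq A] (a : A) (f : A → ℝ) : mean (Pi.single a 1) f = f a := by
  simp only [mean, Pi.single_apply, ite_mul, one_mul, zero_mul, Finset.sum_ite_eq',
    Finset.mem_univ, if_true]

lemma mean_single_right [DecidableEq A] (p : A → ℝ) (a : A) : mean p (Pi.single a 1) = p a := by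
  simp only [mean, Pi.single_apply, mul_ite, mul_one, mul_zero, Finset.sum_ite_eq',
    Finset.mem_univ, if_true]

lemma mean_jointLaw (q : S → ℝ) (W : S → A → ℝ) (f : S × A → ℝ) :
    mean (jointLaw q W) f = mean q fun s => mean (W s) fun a => f (s, a) := by
  simp only [mean, jointLaw, Fintype.sum_prod_type, Finset.mul_sum, mul_assoc]

lemma prob_jointLaw (q : S → ℝ) (W : S → A → ℝ) (E : Set (S × A)) :
    prob (jointLaw q W) E = mean q fun s => prob (W s) {a | (s, a) ∈ E} :=
  mean_jointLaw q W _

lemma isPmf_jointLaw {q : S → ℝ} {W : S → A → ℝ} (hq : IsPmf q) (hW : IsCondPmf W) :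
    IsPmf (jointLaw q W) := by
  refine ⟨fun z => mul_nonneg (hq.1 z.1) ((hW z.1).1 z.2), ?_⟩
  simp only [jointLaw, Fintype.sum_prod_type, ← Finset.mul_sum, (hW _).2, mul_one, hq.2]

lemma isPmf_margX {p : S × A → ℝ} (hp : IsPmf p) : IsPmf (margX p) :=
  ⟨fun s => Finset.sum_nonneg fun a _ => hp.1 (s, a), (Fintype.sum_prod_type p).symm.trans hp.2⟩

lemma isPmf_margY {p : S × A → ℝ} (hp : IsPmf p) : IsPmf (margY p) :=
  ⟨fun a => Finset.sum_nonneg fun s _ => hp.1 (s, a),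
    (Fintype.sum_prod_type_right p).symm.trans hp.2⟩

omit [Fintype S] in
lemma le_margX {p : S × A → ℝ} (hp : ∀ z, 0 ≤ p z) (z : S × A) : p z ≤ margX p z.1 :=
  Finset.single_le_sum (f := fun a => p (z.1, a)) (fun a _ => hp (z.1, a)) (Finset.mem_univ z.2)

omit [Fintype A] in
lemma le_margY {p : S × A → ℝ} (hp : ∀ z, 0 ≤ p z) (z : S × A) : p z ≤ margY p z.2 :=
  Finset.single_le_sum (f := fun s => p (s, z.2)) (fun s _ => hp (s, z.2)) (Finset.mem_univ z.1)

lemma mean_margX (p : S × A → ℝ) (f : S → ℝ) : mean (margX p) f = mean p fun z => f z.1 := by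
  simp only [mean, margX, Fintype.sum_prod_type, Finset.sum_mul]

lemma mean_margY (p : S × A → ℝ) (f : A → ℝ) : mean (margY p) f = mean p fun z => f z.2 := by
  simp only [mean, margY, Fintype.sum_prod_type_right, Finset.sum_mul]

omit [Fintype S] in
lemma margX_jointLaw (q : S → ℝ) {W : S → A → ℝ} (hW : IsCondPmf W) :
    margX (jointLaw q W) = q := by
  ext s
  simp only [margX, jointLaw, ← Finset.mul_sum, (hW s).2, mul_one]

lemma IsPmf.exists_jointLaw_eq {p : S × A → ℝ} (hp : IsPmf p) :
    ∃ W : S → A → ℝ, IsCondPmf W ∧ jointLaw (margX p) W = p := by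
  obtain ⟨-, a₀⟩ := hp.nonempty.some
  refine ⟨fun s a => if margX p s = 0 then (Pi.single a₀ 1 : A → ℝ) a
    else p (s, a) / margX p s, ?_, ?_⟩
  · intro s
    by_cases h : margX p s = 0
    · simp only [h, if_true]
      exact isPmf_single a₀
    · simp only [h, if_false]
      exact ⟨fun a => div_nonneg (hp.1 _) ((isPmf_margX hp).1 s),
        by rw [← Finset.sum_div]; exact div_self h⟩
  · ext ⟨s, a⟩
    by_cases h : margX p s = 0
    · rw [jointLaw, h, zero_mul]
      exact ((hp.1 _).antisymm ((le_margX hp.1 (s, a)).trans_eq h))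
    · simp only [jointLaw, h, if_false, mul_div_cancel₀ (p (s, a)) h]

lemma mean_iidLaw_prod (p : Z → ℝ) (f : ι → Z → ℝ) :
    mean (iidLaw p ι) (fun z => ∏ i, f i (z i)) = ∏ i, mean p (f i) := by
  simp only [mean, iidLaw, ← Finset.prod_mul_distrib, Fintype.prod_sum]

lemma isPmf_iidLaw {p : Z → ℝ} (hp : IsPmf p) : IsPmf (iidLaw p ι) :=
  ⟨fun z => Finset.prod_nonneg fun i _ => hp.1 (z i), by
    simp only [iidLaw, ← Fintype.prod_sum fun (_ : ι) => p, hp.2, Finset.prod_const_one]⟩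

omit [DecidableEq ι] in
lemma pos_of_iidLaw_pos {p : Z → ℝ} (hp : IsPmf p) {z : ι → Z} (hz : 0 < iidLaw p ι z) (i : ι) :
    0 < p (z i) :=
  (hp.1 _).lt_of_ne' (Finset.prod_ne_zero_iff.1 hz.ne' i (Finset.mem_univ i))

lemma mean_iidLaw_apply {p : Z → ℝ} (hp : IsPmf p) (f : Z → ℝ) (j : ι) :
    mean (iidLaw p ι) (fun z => f (z j)) = mean p f := by
  have h := mean_iidLaw_prod p fun i z => if i = j then f z else 1
  have hmean (i : ι) : mean p (fun z => if i = j then f z else 1) =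
      if i = j then mean p f else 1 := by
    split_ifs
    exacts [rfl, hp.mean_const 1]
  simpa only [hmean, Finset.prod_ite_eq', Finset.mem_univ, if_true] using h

lemma mean_iidLaw_mul {p : Z → ℝ} (hp : IsPmf p) (f g : Z → ℝ) {j k : ι} (hjk : j ≠ k) :
    mean (iidLaw p ι) (fun z => f (z j) * g (z k)) = mean p f * mean p g := by
  have h := mean_iidLaw_prod p fun i z =>
    (if i = j then f z else 1) * (if i = k then g z else 1)
  have hmean (i : ι) :
      mean p (fun z => (if i = j then f z else 1) * (if i = k then g z else 1)) =
        (if i = j then mean p f else 1) * (if i = k then mean p g else 1) := by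
    split_ifs with hj hk
    · exact absurd (hj.symm.trans hk) hjk
    · simp only [mul_one]
    · simp only [one_mul]
    · simp only [mul_one, hp.mean_const]
  simpa only [hmean, Finset.prod_mul_distrib, Finset.prod_ite_eq', Finset.mem_univ, if_true]
    using h

lemma mean_iidLaw_sum_sq {p : Z → ℝ} (hp : IsPmf p) {f : Z → ℝ} (hf : mean p f = 0) :
    mean (iidLaw p ι) (fun z => (∑ i, f (z i)) ^ 2) =
      Fintype.card ι * mean p fun z => f z ^ 2 := by
  have hcov (i k : ι) : mean (iidLaw p ι) (fun z => f (z i) * f (z k)) =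
      if i = k then mean p fun z => f z ^ 2 else 0 := by
    split_ifs with hik
    · subst hik
      simp only [← sq]
      exact mean_iidLaw_apply hp (fun z => f z ^ 2) i
    · rw [mean_iidLaw_mul hp f f hik, hf, zero_mul]
  simp only [sq (∑ _, _), Finset.sum_mul_sum, mean_sum, hcov, Finset.sum_ite_eq,
    Finset.mem_univ, if_true, Finset.sum_const, Finset.card_univ, nsmul_eq_mul]

open Filter Topology in
lemma eventually_prob_iidLaw_sum_le {p : Z → ℝ} (hp : IsPmf p) (f : Z → ℝ) {γ ε : ℝ}
    (hγ : 0 < γ) (hε : 0 < ε) : ∀ᶠ n : ℕ in atTop,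
      prob (iidLaw p (Fin n)) {z | n * (mean p f + γ) ≤ ∑ i, f (z i)} ≤ ε := by
  set σ := mean p fun z => (f z - mean p f) ^ 2
  have hcentred : mean p (fun z => f z - mean p f) = 0 := by
    rw [mean_sub, hp.mean_const, sub_self]
  have hlim : Tendsto (fun n : ℕ => σ / γ ^ 2 / n) atTop (𝓝 0) :=
    tendsto_const_div_atTop_nhds_zero_nat (σ / γ ^ 2)
  filter_upwards [hlim.eventually_le_const hε, eventually_gt_atTop 0] with n hn hn0
  have hn0 : (0 : ℝ) < n := Nat.cast_pos.2 hn0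
  have hnonneg := (isPmf_iidLaw (ι := Fin n) hp).1
  calc prob (iidLaw p (Fin n)) {z | n * (mean p f + γ) ≤ ∑ i, f (z i)}
      ≤ prob (iidLaw p (Fin n)) {z | (n * γ) ^ 2 ≤ (∑ i, (f (z i) - mean p f)) ^ 2} := by
        refine prob_mono hnonneg fun z _ hz =>
          pow_le_pow_left₀ (mul_nonneg hn0.le hγ.le) ?_ 2
        have hz : n * (mean p f + γ) ≤ ∑ i, f (z i) := hz
        simp only [Finset.sum_sub_distrib, Finset.sum_const, Finset.card_univ, Fintype.card_fin,
          nsmul_eq_mul]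
        linarith
    _ ≤ n * σ / (n * γ) ^ 2 := by
        refine (prob_le_mean_div hnonneg (fun z => sq_nonneg (∑ i, (f (z i) - mean p f)))
          (by positivity)).trans_eq ?_
        rw [mean_iidLaw_sum_sq hp hcentred, Fintype.card_fin]
    _ = σ / γ ^ 2 / n := by field_simp
    _ ≤ ε := hn

open Filter in
lemma eventually_prob_rpow_mul_prod_lt_le {p : Z → ℝ} (hp : IsPmf p) {u v : Z → ℝ}
    (hu : ∀ z, 0 < p z → 0 < u z) (hv : ∀ z, 0 < p z → 0 < v z) {γ ε : ℝ} (hγ : 0 < γ)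
    (hε : 0 < ε) : ∀ᶠ n : ℕ in atTop, prob (iidLaw p (Fin n))
      {z | (2 : ℝ) ^ (n * (mean p (fun z => Real.logb 2 (u z / v z)) + γ)) * ∏ i, v (z i) <
        ∏ i, u (z i)} ≤ ε := by
  filter_upwards [eventually_prob_iidLaw_sum_le hp (fun z => Real.logb 2 (u z / v z)) hγ hε]
    with n hn
  refine (prob_mono (isPmf_iidLaw hp).1 fun z hz hlt => ?_).trans hn
  have hu' (i : Fin n) := hu _ (pos_of_iidLaw_pos hp hz i)
  have hv' (i : Fin n) := hv _ (pos_of_iidLaw_pos hp hz i)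
  have hlt : (2 : ℝ) ^ (n * (mean p (fun z => Real.logb 2 (u z / v z)) + γ)) * ∏ i, v (z i) <
    ∏ i, u (z i) := hlt
  rw [← lt_div_iff₀ (Finset.prod_pos fun i _ => hv' i), ← Finset.prod_div_distrib] at hlt
  change _ ≤ ∑ i, Real.logb 2 (u (z i) / v (z i))
  rw [← Real.logb_prod _ _ fun i _ => (div_pos (hu' i) (hv' i)).ne']
  exact (Real.le_logb_iff_rpow_le one_lt_two
    (Finset.prod_pos fun i _ => div_pos (hu' i) (hv' i))).2 hlt.le

end Laws

section Information

variable {α β γ : Type} [Fintype α] [Fintype β] [Fintype γ]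

/-- The law of `(B, C)` when `((A, B), C)` has law `p`. -/
def margYZ (p : (α × β) × γ → ℝ) : β × γ → ℝ := fun bc => ∑ a, p ((a, bc.1), bc.2)

/-- The conditional mutual information `I(A;C|B)` of a law of `((A, B), C)`: this is `condMI`
with the triple bracketed the way `jointLaw` produces it. -/
def condInfo (p : (α × β) × γ → ℝ) : ℝ := condMI fun t : α × β × γ => p ((t.1, t.2.1), t.2.2)

/-- The likelihood ratio `p(a,c|b) / (p(a|b) p(c|b))`, whose mean logarithm is `condInfo p`. -/
def condInfoRatio (p : (α × β) × γ → ℝ) (t : (α × β) × γ) : ℝ :=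
  p t * margY (margX p) t.1.2 / (margX p t.1 * margYZ p (t.1.2, t.2))

omit [Fintype β] [Fintype γ] in
lemma le_margYZ {p : (α × β) × γ → ℝ} (hp : ∀ t, 0 ≤ p t) (t : (α × β) × γ) :
    p t ≤ margYZ p (t.1.2, t.2) :=
  Finset.single_le_sum (f := fun a => p ((a, t.1.2), t.2)) (fun a _ => hp ((a, t.1.2), t.2))
    (Finset.mem_univ t.1.1)

lemma mean_margYZ (p : (α × β) × γ → ℝ) (f : β × γ → ℝ) :
    mean (margYZ p) f = mean p fun t => f (t.1.2, t.2) := by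
  simp only [mean, margYZ, Fintype.sum_prod_type_right, Finset.sum_mul]

omit [Fintype β] in
lemma condInfoRatio_pos {p : (α × β) × γ → ℝ} (hp : ∀ t, 0 ≤ p t) {t : (α × β) × γ}
    (ht : 0 < p t) : 0 < condInfoRatio p t := by
  have hX : 0 < margX p t.1 := ht.trans_le (le_margX hp t)
  have hX_nonneg (ab : α × β) : 0 ≤ margX p ab := Finset.sum_nonneg fun c _ => hp (ab, c)
  have hB : 0 < margY (margX p) t.1.2 := hX.trans_le (le_margY hX_nonneg t.1)
  have hYZ : 0 < margYZ p (t.1.2, t.2) := ht.trans_le (le_margYZ hp t)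
  unfold condInfoRatio
  positivity

omit [Fintype β] in
lemma condInfoRatio_nonneg {p : (α × β) × γ → ℝ} (hp : ∀ t, 0 ≤ p t) (t : (α × β) × γ) :
    0 ≤ condInfoRatio p t := by
  rcases (hp t).eq_or_lt with h | h
  · rw [condInfoRatio, ← h, zero_mul, zero_div]
  · exact (condInfoRatio_pos hp h).le

lemma condInfo_eq_mean {p : (α × β) × γ → ℝ} (hp : ∀ t, 0 ≤ p t) :
    condInfo p = mean p fun t => Real.logb 2 (condInfoRatio p t) := by
  have hH2 : H2 (fun t : α × β × γ => p ((t.1, t.2.1), t.2.2)) = H2 p :=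
    congrArg Neg.neg ((Equiv.prodAssoc α β γ).symm.sum_comp fun t => p t * Real.logb 2 (p t))
  have hentropies : condInfo p = mean p fun t => Real.logb 2 (p t) +
      Real.logb 2 (margY (margX p) t.1.2) - Real.logb 2 (margX p t.1) -
        Real.logb 2 (margYZ p (t.1.2, t.2)) := by
    have hexpand : condInfo p = H2 (margX p) + H2 (margYZ p) -
        H2 (fun t : α × β × γ => p ((t.1, t.2.1), t.2.2)) - H2 (margY (margX p)) := rfl
    rw [hexpand, hH2, mean_sub, mean_sub, mean_add,
      ← mean_margX p fun ab => Real.logb 2 (margY (margX p) ab.2),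
      ← mean_margX p fun ab => Real.logb 2 (margX p ab),
      ← mean_margY (margX p) fun b => Real.logb 2 (margY (margX p) b),
      ← mean_margYZ p fun bc => Real.logb 2 (margYZ p bc)]
    simp only [H2, mean]
    ring
  rw [hentropies]
  refine mean_congr hp fun t ht => ?_
  have hratio := condInfoRatio_pos hp ht
  rw [condInfoRatio] at hratio ⊢
  have hX : 0 < margX p t.1 := ht.trans_le (le_margX hp t)
  have hYZ : 0 < margYZ p (t.1.2, t.2) := ht.trans_le (le_margYZ hp t)
  have hB : 0 < margY (margX p) t.1.2 :=
    pos_of_mul_pos_right ((div_pos_iff_of_pos_right (mul_pos hX hYZ)).1 hratio) ht.le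
  rw [Real.logb_div (mul_pos ht hB).ne' (mul_pos hX hYZ).ne', Real.logb_mul ht.ne' hB.ne',
    Real.logb_mul hX.ne' hYZ.ne', sub_sub]

lemma IsPmf.mean_logb_div_nonneg {p r : α → ℝ} (hp : IsPmf p) (hr : ∀ a, 0 ≤ r a)
    (hr1 : ∑ a, r a ≤ 1) (hpr : ∀ a, 0 < p a → 0 < r a) :
    0 ≤ mean p fun a => Real.logb 2 (p a / r a) := by
  have hmass : mean p (fun a => r a / p a) ≤ 1 := by
    refine (Finset.sum_le_sum fun a _ => ?_).trans hr1
    by_cases h : p a = 0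
    · rw [h, zero_mul]
      exact hr a
    · exact (mul_div_cancel₀ (r a) h).le
  have hjensen := hp.mean_logb_le (fun a ha => div_pos (hpr a ha) ha) one_pos hmass
  rw [Real.logb_one] at hjensen
  have hneg : mean p (fun a => Real.logb 2 (p a / r a)) =
      -1 * mean p fun a => Real.logb 2 (r a / p a) := by
    rw [← mean_const_mul]
    refine mean_congr hp.1 fun a _ => ?_
    rw [← inv_div, Real.logb_inv, neg_one_mul]
  linarith

lemma condInfo_nonneg {p : (α × β) × γ → ℝ} (hp : IsPmf p) : 0 ≤ condInfo p := by
  have hX := isPmf_margX hp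
  have hYZ (bc : β × γ) : 0 ≤ margYZ p bc := Finset.sum_nonneg fun a _ => hp.1 _
  set r : (α × β) × γ → ℝ := fun t =>
    margX p t.1 * margYZ p (t.1.2, t.2) / margY (margX p) t.1.2
  have hsum : ∑ t, r t = 1 := by
    have hcond (b : β) : ∑ c, margYZ p (b, c) = margY (margX p) b := Finset.sum_comm
    simp only [r, Fintype.sum_prod_type_right (f := fun _ : α × β => _),
      Fintype.sum_prod_type (f := fun _ : (α × β) × γ => _), mul_div_assoc, ← Finset.mul_sum,
      ← Finset.sum_div, hcond, ← Finset.sum_mul]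
    refine (Finset.sum_congr rfl fun b _ => ?_).trans (isPmf_margY hX).2
    rw [← mul_div_assoc]
    exact mul_self_div_self _
  rw [condInfo_eq_mean hp.1]
  refine (hp.mean_logb_div_nonneg (r := r) (fun t => div_nonneg (mul_nonneg (hX.1 _) (hYZ _))
    ((isPmf_margY hX).1 _)) hsum.le fun t ht => ?_).trans_eq ?_
  · have hratio := condInfoRatio_pos hp.1 ht
    rw [condInfoRatio, ← div_div_eq_mul_div] at hratio
    exact (div_pos_iff_of_pos_left ht).1 hratio
  · simp only [condInfoRatio, r, div_div_eq_mul_div]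

lemma continuous_H2 : Continuous fun p : α → ℝ => H2 p := by
  simp only [H2, Real.logb, ← mul_div_assoc]
  exact (continuous_finsetSum _ fun a _ =>
    (Real.continuous_mul_log.comp (continuous_apply a)).div_const _).neg

lemma continuous_condInfo : Continuous fun p : (α × β) × γ → ℝ => condInfo p := by
  unfold condInfo condMI
  refine ((Continuous.add ?_ ?_).sub ?_).sub ?_ <;>
    exact continuous_H2.comp (by fun_prop)

end Information

section Converse

variable {Ω Z 𝒳 𝒴 C Yh : Type} [Fintype Ω] [Fintype Z] [Fintype 𝒳] [Fintype 𝒴] [Fintype C]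
variable {n m : ℕ}

/-- The law of the letter `z ω i` when `ω` has law `P` and the index `i` is uniform. -/
def empiricalLaw (P : Ω → ℝ) (z : Ω → Fin n → Z) : Z → ℝ := fun t =>
  mean P fun ω => (n : ℝ)⁻¹ * ∑ i, (Pi.single (z ω i) 1 : Z → ℝ) t

lemma mean_empiricalLaw (P : Ω → ℝ) (z : Ω → Fin n → Z) (h : Z → ℝ) :
    mean (empiricalLaw P z) h = mean P fun ω => (n : ℝ)⁻¹ * ∑ i, h (z ω i) := by
  have hcomm : mean (empiricalLaw P z) h =
      mean h fun t => mean P fun ω => (n : ℝ)⁻¹ * ∑ i, (Pi.single (z ω i) 1 : Z → ℝ) t :=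
    Finset.sum_congr rfl fun t _ => mul_comm _ _
  simp only [hcomm, mean_comm h P, mean_const_mul, mean_sum, mean_single_right]

omit [Fintype Z] in
lemma empiricalLaw_nonneg {P : Ω → ℝ} (hP : ∀ ω, 0 ≤ P ω) (z : Ω → Fin n → Z) (t : Z) :
    0 ≤ empiricalLaw P z t :=
  mean_nonneg hP fun ω => mul_nonneg (by positivity)
    (Finset.sum_nonneg fun i _ => single_one_nonneg (z ω i) t)

omit [Fintype Z] in
lemma empiricalLaw_pos {P : Ω → ℝ} (hP : ∀ ω, 0 ≤ P ω) (z : Ω → Fin n → Z) {ω : Ω}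
    (hω : 0 < P ω) (i : Fin n) : 0 < empiricalLaw P z (z ω i) := by
  have hn : (0 : ℝ) < n := Nat.cast_pos.2 i.pos
  have hsingle (ω' : Ω) (k : Fin n) := single_one_nonneg (z ω' k) (z ω i)
  refine Finset.sum_pos' (fun ω' _ => mul_nonneg (hP ω')
    (mul_nonneg (by positivity) (Finset.sum_nonneg fun k _ => hsingle ω' k)))
    ⟨ω, Finset.mem_univ ω, mul_pos hω (mul_pos (by positivity) ?_)⟩
  exact Finset.sum_pos' (fun k _ => hsingle ω k) ⟨i, Finset.mem_univ i, by simp⟩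

lemma isPmf_empiricalLaw {P : Ω → ℝ} (hP : IsPmf P) (hn : 0 < n) (z : Ω → Fin n → Z) :
    IsPmf (empiricalLaw P z) := by
  refine ⟨empiricalLaw_nonneg hP.1 z, ?_⟩
  have hn' : (n : ℝ) ≠ 0 := Nat.cast_ne_zero.2 hn.ne'
  calc ∑ t, empiricalLaw P z t = mean (empiricalLaw P z) fun _ => 1 := by simp only [mean, mul_one]
    _ = mean P fun _ => (n : ℝ)⁻¹ * n := by
        simp only [mean_empiricalLaw, Finset.sum_const, Finset.card_univ, Fintype.card_fin,
          nsmul_eq_mul, mul_one]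
    _ = 1 := by rw [hP.mean_const, inv_mul_cancel₀ hn']

lemma mean_iid (q : 𝒳 × 𝒴 → ℝ) (F : (Fin n → 𝒳) × (Fin n → 𝒴) → ℝ) :
    mean (iid q n) F = mean (iidLaw q (Fin n)) fun z => F (fun i => (z i).1, fun i => (z i).2) :=
  (mean_comp_equiv (Equiv.arrowProdEquivProdArrow (Fin n) (fun _ => 𝒳) fun _ => 𝒴)
    (iid q n) F).symm

lemma isPmf_iid {q : 𝒳 × 𝒴 → ℝ} (hq : IsPmf q) : IsPmf (iid q n) :=
  (isPmf_iidLaw hq).comp_equiv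
    (Equiv.arrowProdEquivProdArrow (Fin n) (fun _ => 𝒳) fun _ => 𝒴).symm

lemma mean_iid_average {q : 𝒳 × 𝒴 → ℝ} (hq : IsPmf q) (hn : 0 < n) (h : 𝒳 × 𝒴 → ℝ) :
    mean (iid q n) (fun xy => (n : ℝ)⁻¹ * ∑ i, h (xy.1 i, xy.2 i)) = mean q h := by
  simp only [mean_iid, mean_const_mul, mean_sum, Prod.mk.eta, mean_iidLaw_apply hq,
    Finset.sum_const, Finset.card_univ, Fintype.card_fin, nsmul_eq_mul]
  exact inv_mul_cancel_left₀ (Nat.cast_ne_zero.2 hn.ne') _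

lemma margX_empiricalLaw_iid {q : 𝒳 × 𝒴 → ℝ} (hq : IsPmf q) (hn : 0 < n)
    (c : (Fin n → 𝒳) × (Fin n → 𝒴) → Fin n → C) :
    margX (empiricalLaw (iid q n) fun xy i => ((xy.1 i, xy.2 i), c xy i)) = q := by
  ext s
  rw [← mean_single_right (margX _), mean_margX, mean_empiricalLaw]
  exact (mean_iid_average hq hn (Pi.single s 1)).trans (mean_single_right q s)

omit [Fintype 𝒴] in
lemma sum_margX_mul_condInfoRatio_le {p : (𝒳 × 𝒴) × C → ℝ} (hp : ∀ t, 0 ≤ p t) (y : 𝒴) (c : C) :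
    ∑ x, margX p (x, y) * condInfoRatio p ((x, y), c) ≤ margY (margX p) y := by
  have hX (x : 𝒳) : 0 ≤ margX p (x, y) := Finset.sum_nonneg fun c _ => hp ((x, y), c)
  have hY : 0 ≤ margY (margX p) y := Finset.sum_nonneg fun x _ => hX x
  have hYZ : 0 ≤ margYZ p (y, c) := Finset.sum_nonneg fun x _ => hp ((x, y), c)
  calc ∑ x, margX p (x, y) * condInfoRatio p ((x, y), c)
      ≤ ∑ x, p ((x, y), c) * (margY (margX p) y / margYZ p (y, c)) := by
        refine Finset.sum_le_sum fun x _ => ?_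
        by_cases h : margX p (x, y) = 0
        · rw [h, zero_mul]
          exact mul_nonneg (hp _) (div_nonneg hY hYZ)
        · simp only [condInfoRatio]
          rw [← mul_div_assoc, mul_div_mul_left _ _ h, mul_div_assoc]
    _ = margYZ p (y, c) * (margY (margX p) y / margYZ p (y, c)) := by
        rw [← Finset.sum_mul, margYZ]
    _ ≤ margY (margX p) y := by
        rw [mul_div_left_comm]
        exact mul_le_of_le_one_right hY (div_self_le_one _)

lemma mean_iid_prod_condInfoRatio_le_one {p : (𝒳 × 𝒴) × C → ℝ} (hp : IsPmf p)
    (c : (Fin n → 𝒴) → Fin n → C) :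
    mean (iid (margX p) n) (fun xy => ∏ i, condInfoRatio p ((xy.1 i, xy.2 i), c xy.2 i)) ≤ 1 := by
  have hq := isPmf_margX hp
  calc mean (iid (margX p) n) (fun xy => ∏ i, condInfoRatio p ((xy.1 i, xy.2 i), c xy.2 i))
      = ∑ y : Fin n → 𝒴, ∏ i, ∑ x, margX p (x, y i) * condInfoRatio p ((x, y i), c y i) := by
        simp only [mean, iid, Fintype.sum_prod_type_right, ← Finset.prod_mul_distrib,
          Fintype.prod_sum]
    _ ≤ ∑ y : Fin n → 𝒴, iidLaw (margY (margX p)) (Fin n) y := by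
        refine Finset.sum_le_sum fun y _ => Finset.prod_le_prod (fun i _ => ?_)
          fun i _ => sum_margX_mul_condInfoRatio_le hp.1 (y i) (c y i)
        exact Finset.sum_nonneg fun x _ => mul_nonneg (hq.1 _) (condInfoRatio_nonneg hp.1 _)
    _ = 1 := (isPmf_iidLaw (isPmf_margY hq)).2

-- Given its message `k`, the reconstruction is a function of `y` alone: summing over `k` instead
-- of inserting `f xy` costs a factor `m` and leaves each likelihood ratio with mean at most one.
lemma mean_iid_prod_condInfoRatio_code_le {p : (𝒳 × 𝒴) × C → ℝ} (hp : IsPmf p)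
    (f : (Fin n → 𝒳) × (Fin n → 𝒴) → Fin m) (g : Fin m × (Fin n → 𝒴) → Fin n → C) :
    mean (iid (margX p) n)
      (fun xy => ∏ i, condInfoRatio p ((xy.1 i, xy.2 i), g (f xy, xy.2) i)) ≤ m := by
  calc mean (iid (margX p) n)
        (fun xy => ∏ i, condInfoRatio p ((xy.1 i, xy.2 i), g (f xy, xy.2) i))
      ≤ mean (iid (margX p) n) fun xy =>
          ∑ k, ∏ i, condInfoRatio p ((xy.1 i, xy.2 i), g (k, xy.2) i) :=
        mean_le_mean (isPmf_iid (isPmf_margX hp)).1 fun xy _ => Finset.single_le_sum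
          (f := fun k => ∏ i, condInfoRatio p ((xy.1 i, xy.2 i), g (k, xy.2) i))
          (fun k _ => Finset.prod_nonneg fun i _ => condInfoRatio_nonneg hp.1 _)
          (Finset.mem_univ (f xy))
    _ ≤ ∑ _k : Fin m, 1 := by
        rw [mean_sum]
        exact Finset.sum_le_sum fun k _ =>
          mean_iid_prod_condInfoRatio_le_one hp fun y => g (k, y)
    _ = m := by simp

lemma condInfo_empiricalLaw_le {q : 𝒳 × 𝒴 → ℝ} (hq : IsPmf q) (hn : 0 < n)
    (f : (Fin n → 𝒳) × (Fin n → 𝒴) → Fin m) (g : Fin m × (Fin n → 𝒴) → Fin n → C) :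
    condInfo (empiricalLaw (iid q n) fun xy i => ((xy.1 i, xy.2 i), g (f xy, xy.2) i)) ≤
      Real.logb 2 m / n := by
  set z : (Fin n → 𝒳) × (Fin n → 𝒴) → Fin n → (𝒳 × 𝒴) × C :=
    fun xy i => ((xy.1 i, xy.2 i), g (f xy, xy.2) i)
  set p := empiricalLaw (iid q n) z
  have hP : IsPmf (iid q n) := isPmf_iid hq
  have hpX : margX p = q := margX_empiricalLaw_iid hq hn _
  have hp : IsPmf p := isPmf_empiricalLaw hP hn z
  have hm : (0 : ℝ) < m := Nat.cast_pos.2 (f hP.nonempty.some).pos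
  have hratio (xy) (hxy : 0 < iid q n xy) (i : Fin n) : 0 < condInfoRatio p (z xy i) :=
    condInfoRatio_pos hp.1 (empiricalLaw_pos hP.1 z hxy i)
  have hmean : mean (iid q n) (fun xy => ∏ i, condInfoRatio p (z xy i)) ≤ m := by
    rw [← hpX]
    exact mean_iid_prod_condInfoRatio_code_le hp f g
  calc condInfo p
      = (n : ℝ)⁻¹ * mean (iid q n) fun xy => ∑ i, Real.logb 2 (condInfoRatio p (z xy i)) := by
        rw [condInfo_eq_mean hp.1, mean_empiricalLaw, mean_const_mul]
    _ = (n : ℝ)⁻¹ * mean (iid q n) fun xy => Real.logb 2 (∏ i, condInfoRatio p (z xy i)) := by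
        congr 1
        exact mean_congr hP.1 fun xy hxy =>
          (Real.logb_prod _ _ fun i _ => (hratio xy hxy i).ne').symm
    _ ≤ (n : ℝ)⁻¹ * Real.logb 2 m := by
        gcongr
        exact hP.mean_logb_le (fun xy hxy => Finset.prod_pos fun i _ => hratio xy hxy i) hm hmean
    _ = Real.logb 2 m / n := inv_mul_eq_div _ _

/-- The rates over which `condRD` minimises. -/
def condRates (q : 𝒳 × 𝒴 → ℝ) (δ : 𝒳 → C → ℝ) (d : ℝ) : Set ℝ :=
  {r | ∃ W : 𝒳 × 𝒴 → C → ℝ, IsCondPmf W ∧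
    mean (jointLaw q W) (fun t => δ t.1.1 t.2) ≤ d ∧ r = condInfo (jointLaw q W)}

lemma condRD_eq_sInf (q : 𝒳 × 𝒴 → ℝ) (δ : 𝒳 → C → ℝ) (d : ℝ) :
    condRD q δ d = sInf (condRates q δ d) := by
  simp only [condRD, condRates, mean, jointLaw, condInfo, Fintype.sum_prod_type]

-- By compactness the infimum defining `condRD` is attained, which lets `ε` tend to zero.
lemma condRD_le_of_forall_pos {q : 𝒳 × 𝒴 → ℝ} (hq : IsPmf q) (δ : 𝒳 → C → ℝ) {d r : ℝ}
    (h : ∀ ε > 0, ∃ W : 𝒳 × 𝒴 → C → ℝ, IsCondPmf W ∧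
      mean (jointLaw q W) (fun t => δ t.1.1 t.2) ≤ d + ε ∧ condInfo (jointLaw q W) ≤ r + ε) :
    condRD q δ d ≤ r := by
  set excess : (𝒳 × 𝒴 → C → ℝ) → ℝ := fun W =>
    max (mean (jointLaw q W) (fun t => δ t.1.1 t.2) - d) (condInfo (jointLaw q W) - r)
  set kernels : Set (𝒳 × 𝒴 → C → ℝ) := Set.univ.pi fun _ => stdSimplex ℝ C
  have hmem {W : 𝒳 × 𝒴 → C → ℝ} : W ∈ kernels ↔ IsCondPmf W :=
    ⟨fun hW s => hW s trivial, fun hW s _ => hW s⟩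
  have hcont : Continuous excess := by
    have hjoint : Continuous fun W : 𝒳 × 𝒴 → C → ℝ => jointLaw q W := by
      unfold jointLaw; fun_prop
    refine Continuous.max (Continuous.sub ?_ continuous_const)
      ((continuous_condInfo.comp hjoint).sub continuous_const)
    unfold mean jointLaw
    fun_prop
  have hne : kernels.Nonempty := by
    obtain ⟨W, hW, -⟩ := h 1 one_pos
    exact ⟨W, hmem.2 hW⟩
  obtain ⟨W, hW, hmin⟩ := (isCompact_univ_pi fun _ => isCompact_stdSimplex ℝ C).exists_isMinOn hne
    hcont.continuousOn
  have hle : excess W ≤ 0 := by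
    refine le_of_forall_pos_le_add fun ε hε => ?_
    obtain ⟨V, hV, hd, hr⟩ := h ε hε
    exact (hmin (hmem.2 hV)).trans (max_le (by linarith) (by linarith))
  obtain ⟨hd, hr⟩ := max_le_iff.1 hle
  rw [condRD_eq_sInf]
  have hbdd : BddBelow (condRates q δ d) := by
    refine ⟨0, ?_⟩
    rintro _ ⟨V, hV, -, rfl⟩
    exact condInfo_nonneg (isPmf_jointLaw hq hV)
  exact (csInf_le hbdd ⟨W, hmem.1 hW, sub_nonpos.1 hd, rfl⟩).trans (sub_nonpos.1 hr)

lemma exists_kernel_of_code {q : 𝒳 × 𝒴 → ℝ} (hq : IsPmf q) (δ : 𝒳 → C → ℝ) (hn : 0 < n)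
    (f : (Fin n → 𝒳) × (Fin n → 𝒴) → Fin m) (g : Fin m × (Fin n → 𝒴) → Fin n → C) :
    ∃ W : 𝒳 × 𝒴 → C → ℝ, IsCondPmf W ∧
      mean (jointLaw q W) (fun t => δ t.1.1 t.2) = Delta1 q δ f g ∧
      condInfo (jointLaw q W) ≤ Real.logb 2 m / n := by
  obtain ⟨W, hW, hWp⟩ := (isPmf_empiricalLaw (isPmf_iid hq) hn
    fun xy i => ((xy.1 i, xy.2 i), g (f xy, xy.2) i)).exists_jointLaw_eq
  rw [margX_empiricalLaw_iid hq hn] at hWp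
  refine ⟨W, hW, ?_, ?_⟩
  · rw [hWp, mean_empiricalLaw]
    rfl
  · rw [hWp]
    exact condInfo_empiricalLaw_le hq hn f g

lemma condRD_le_of_rdAchievable {q : 𝒳 × 𝒴 → ℝ} (hq : IsPmf q) {δ1 : 𝒳 → C → ℝ}
    {δ2 : 𝒴 → Yh → ℝ} {d1 d2 r : ℝ} (h : RDAchievable q δ1 δ2 d1 d2 r) : condRD q δ1 d1 ≤ r :=
  condRD_le_of_forall_pos hq δ1 fun ε hε => by
    obtain ⟨n, m, f, g1, -, hn, hr, hd, -⟩ := h ε hε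
    obtain ⟨W, hW, hdW, hrW⟩ := exists_kernel_of_code hq δ1 hn f g1
    exact ⟨W, hW, hdW.trans_le hd, hrW.trans hr⟩

lemma isPmf_swap {q : 𝒳 × 𝒴 → ℝ} (hq : IsPmf q) : IsPmf (swap q) :=
  hq.comp_equiv (Equiv.prodComm 𝒴 𝒳)

lemma Delta1_swap (q : 𝒳 × 𝒴 → ℝ) (δ2 : 𝒴 → Yh → ℝ)
    (f : (Fin n → 𝒳) × (Fin n → 𝒴) → Fin m) (g2 : Fin m × (Fin n → 𝒳) → Fin n → Yh) :
    Delta1 (swap q) δ2 (f ∘ Prod.swap) g2 = Delta2 q δ2 f g2 :=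
  (Equiv.prodComm (Fin n → 𝒴) (Fin n → 𝒳)).sum_comp fun xy =>
    iid q n xy * ((n : ℝ)⁻¹ * ∑ i, δ2 (xy.2 i) (g2 (f xy, xy.1) i))

omit [Fintype C] in
lemma RDAchievable.swap {q : 𝒳 × 𝒴 → ℝ} {δ1 : 𝒳 → C → ℝ} {δ2 : 𝒴 → Yh → ℝ} {d1 d2 r : ℝ}
    (h : RDAchievable q δ1 δ2 d1 d2 r) : RDAchievable (swap q) δ2 δ1 d2 d1 r := by
  intro ε hε
  obtain ⟨n, m, f, g1, g2, hn, hr, hd1, hd2⟩ := h ε hε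
  exact ⟨n, m, f ∘ Prod.swap, g2, g1, hn, hr, (Delta1_swap q δ2 f g2).trans_le hd2,
    (Delta1_swap (TWR.swap q) δ1 (f ∘ Prod.swap) g1).symm.trans_le hd1⟩

end Converse

section OneShot

variable {Ω X Y A ι : Type} [Fintype Ω] [Fintype X] [Fintype Y] [Fintype A] [Fintype ι]
  [DecidableEq ι] {m : ℕ}

lemma prob_iidLaw_forall_mem (p : A → ℝ) (B : Set A) :
    prob (iidLaw p ι) {c | ∀ j, c j ∈ B} = prob p B ^ Fintype.card ι := by
  have hind (c : ι → A) :
      Set.indicator {c : ι → A | ∀ j, c j ∈ B} 1 c = ∏ j, B.indicator (1 : A → ℝ) (c j) := by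
    simp only [Set.indicator_apply, Pi.one_apply, Finset.prod_ite_zero, Finset.prod_const_one]
    simp
  rw [prob, funext hind, mean_iidLaw_prod, Finset.prod_const, Finset.card_univ, prob]

lemma exp_neg_mul_le {w : ℝ} (hw0 : 0 ≤ w) (hw1 : w ≤ 1) (x : ℝ) :
    Real.exp (-(x * w)) ≤ 1 - w + Real.exp (-x) := by
  have hconvex := convexOn_exp.2 (Set.mem_univ (-x)) (Set.mem_univ 0) hw0 (sub_nonneg.2 hw1)
    (add_sub_cancel w 1)
  simp only [smul_eq_mul, mul_zero, add_zero, Real.exp_zero, mul_one] at hconvex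
  calc Real.exp (-(x * w)) = Real.exp (w * -x) := by ring_nf
    _ ≤ w * Real.exp (-x) + (1 - w) := hconvex
    _ ≤ 1 - w + Real.exp (-x) := by
      linarith [mul_le_of_le_one_left (Real.exp_pos (-x)).le hw1]

-- Where `W ≤ K P`, a set of `W`-probability `w` has `P`-probability at least `w / K`, so `K`
-- independent samples from `P` are about enough to hit it.
lemma prob_iidLaw_forall_mem_le {P W : A → ℝ} (hP : IsPmf P) (hW : IsPmf W) (B : Set A) {K : ℝ}
    (hK : 0 < K) : prob (iidLaw P ι) {c | ∀ j, c j ∈ B} ≤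
      prob W B + prob W {a | K * P a < W a} + Real.exp (-(Fintype.card ι / K)) := by
  set H : Set A := {a | K * P a < W a}
  set G : Set A := (B ∪ H)ᶜ
  have hG : prob W G / K ≤ prob P G := by
    rw [div_le_iff₀' hK, prob, prob, ← mean_const_mul]
    refine Finset.sum_le_sum fun a _ => ?_
    by_cases ha : a ∈ G
    · have hle : W a ≤ K * P a := not_lt.1 fun h => ha (Or.inr h)
      simpa only [Set.indicator_of_mem ha, Pi.one_apply, mul_one, mul_comm] using hle
    · simp only [Set.indicator_of_notMem ha, mul_zero, le_refl]
  calc prob (iidLaw P ι) {c | ∀ j, c j ∈ B}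
      ≤ prob (iidLaw P ι) {c | ∀ j, c j ∈ Gᶜ} :=
        prob_mono (isPmf_iidLaw hP).1 fun c _ hc j hj => hj (Or.inl (hc j))
    _ = (1 - prob P G) ^ Fintype.card ι := by rw [prob_iidLaw_forall_mem, hP.prob_compl]
    _ ≤ Real.exp (-prob P G) ^ Fintype.card ι := by
        gcongr
        · exact sub_nonneg.2 (hP.prob_le_one G)
        · exact Real.one_sub_le_exp_neg _
    _ ≤ Real.exp (-(Fintype.card ι / K * prob W G)) := by
        rw [← Real.exp_nat_mul, mul_neg, div_mul_comm, mul_comm (prob W G / K)]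
        gcongr
    _ ≤ 1 - prob W G + Real.exp (-(Fintype.card ι / K)) :=
        exp_neg_mul_le (prob_nonneg hW.1 G) (hW.prob_le_one G) _
    _ ≤ prob W B + prob W H + Real.exp (-(Fintype.card ι / K)) := by
        rw [← hW.prob_compl, compl_compl]
        gcongr
        exact prob_union_le hW.1 B H

lemma mean_prob_uncovered_le {μ : X → ℝ} (hμ : IsPmf μ) {W : X → A → ℝ} (hW : IsCondPmf W)
    {P : A → ℝ} (hP : IsPmf P) (B : X → Set A) {K : ℝ} (hK : 0 < K) :
    mean (iidLaw P ι) (fun c => prob μ {x | ∀ j, c j ∈ B x}) ≤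
      prob (jointLaw μ W) {z | z.2 ∈ B z.1} + prob (jointLaw μ W) {z | K * P z.2 < W z.1 z.2} +
        Real.exp (-(Fintype.card ι / K)) := by
  rw [prob_jointLaw, prob_jointLaw, ← hμ.mean_const (Real.exp _), ← mean_add, ← mean_add]
  simp only [prob]
  rw [mean_comm]
  exact mean_le_mean hμ.1 fun x _ => prob_iidLaw_forall_mem_le hP (hW x) (B x) hK

lemma isPmf_uniform (hm : 0 < m) : IsPmf fun _ : Fin m => (m : ℝ)⁻¹ :=
  ⟨fun _ => by positivity, by simp [hm.ne']⟩

lemma prob_iidLaw_uniform_eq (hm : 0 < m) {j k : ι} (hjk : j ≠ k) :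
    prob (iidLaw (fun _ : Fin m => (m : ℝ)⁻¹) ι) {b | b j = b k} = (m : ℝ)⁻¹ := by
  have hind (b : ι → Fin m) : Set.indicator {b : ι → Fin m | b j = b k} 1 b =
      ∑ l, (Pi.single l 1 : Fin m → ℝ) (b j) * (Pi.single l 1 : Fin m → ℝ) (b k) := by
    simp [Set.indicator_apply, Pi.single_apply, eq_comm]
  rw [prob, funext hind, mean_sum]
  simp only [mean_iidLaw_mul (isPmf_uniform hm) _ _ hjk, mean_single_right, Finset.sum_const,
    Finset.card_univ, Fintype.card_fin, nsmul_eq_mul]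
  exact mul_inv_cancel_left₀ (Nat.cast_ne_zero.2 hm.ne') _

omit [DecidableEq ι] in
lemma prob_exists_le {p : Ω → ℝ} (hp : ∀ ω, 0 ≤ p ω) (E : ι → Set Ω) :
    prob p {ω | ∃ j, ω ∈ E j} ≤ ∑ j, prob p (E j) := by
  simp only [prob, ← mean_sum]
  refine mean_le_mean hp fun ω _ => ?_
  have hnonneg (j : ι) : 0 ≤ (E j).indicator (1 : Ω → ℝ) ω :=
    Set.indicator_nonneg (fun _ _ => zero_le_one) ω
  by_cases hω : ω ∈ {ω | ∃ j, ω ∈ E j}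
  · have ⟨j, hj⟩ := hω
    calc Set.indicator {ω | ∃ j, ω ∈ E j} (1 : Ω → ℝ) ω = (E j).indicator 1 ω := by
          rw [Set.indicator_of_mem hω, Set.indicator_of_mem hj]
      _ ≤ _ := Finset.single_le_sum (f := fun j => (E j).indicator (1 : Ω → ℝ) ω)
        (fun j _ => hnonneg j) (Finset.mem_univ j)
  · rw [Set.indicator_of_notMem hω]
    exact Finset.sum_nonneg fun j _ => hnonneg j

omit [DecidableEq ι] in
lemma exists_bins {p : Ω → ℝ} (hp : ∀ ω, 0 ≤ p ω) (hm : 0 < m) (k : Ω → ι) (T : ι → Set Ω) :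
    ∃ b : ι → Fin m, prob p {ω | ∃ j, j ≠ k ω ∧ b j = b (k ω) ∧ ω ∈ T j} ≤
      (∑ j, prob p (T j)) / m := by
  set U : (ι → Fin m) → ℝ := iidLaw (fun _ => (m : ℝ)⁻¹) ι
  have hU : IsPmf U := isPmf_iidLaw (isPmf_uniform hm)
  refine hU.exists_le_of_mean_le ?_
  have hcollide (ω : Ω) (j : ι) : prob U {b | j ≠ k ω ∧ b j = b (k ω) ∧ ω ∈ T j} ≤
      (m : ℝ)⁻¹ * (T j).indicator 1 ω := by
    by_cases h : j ≠ k ω ∧ ω ∈ T j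
    · rw [Set.indicator_of_mem h.2, Pi.one_apply, mul_one, ← prob_iidLaw_uniform_eq hm h.1]
      exact prob_mono hU.1 fun b _ hb => hb.2.1
    · have hempty : {b : ι → Fin m | j ≠ k ω ∧ b j = b (k ω) ∧ ω ∈ T j} = ∅ :=
        Set.eq_empty_of_forall_notMem fun b hb => h ⟨hb.1, hb.2.2⟩
      rw [hempty, prob, Set.indicator_empty, mean]
      simp only [mul_zero, Finset.sum_const_zero]
      exact mul_nonneg (by positivity) (Set.indicator_nonneg (fun _ _ => zero_le_one) ω)
  calc mean U (fun b => prob p {ω | ∃ j, j ≠ k ω ∧ b j = b (k ω) ∧ ω ∈ T j})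
      = mean p (fun ω => prob U {b | ∃ j, j ≠ k ω ∧ b j = b (k ω) ∧ ω ∈ T j}) :=
        mean_comm U p _
    _ ≤ mean p (fun ω => ∑ j, (m : ℝ)⁻¹ * (T j).indicator 1 ω) :=
        mean_le_mean hp fun ω _ =>
          (prob_exists_le hU.1 _).trans (Finset.sum_le_sum fun j _ => hcollide ω j)
    _ = (∑ j, prob p (T j)) / m := by
        simp only [mean_sum, mean_const_mul, prob, ← Finset.mul_sum, div_eq_inv_mul]

omit [Fintype Y] [Fintype A] [Fintype ι] [DecidableEq ι] in
lemma exists_list_decoder [Nonempty A] (b : ι → Fin m) (c : ι → A) (T : Set (Y × A)) :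
    ∃ g : Fin m × Y → A, ∀ k y, (y, c k) ∈ T →
      (¬∃ j, j ≠ k ∧ b j = b k ∧ (y, c j) ∈ T) → g (b k, y) = c k := by
  have hex (t : Fin m × Y) : ∃ a, ∀ k, t.1 = b k → (t.2, c k) ∈ T →
      (¬∃ j, j ≠ k ∧ b j = b k ∧ (t.2, c j) ∈ T) → a = c k := by
    by_cases h : ∃ k, t.1 = b k ∧ (t.2, c k) ∈ T
    · obtain ⟨j, hj, hjT⟩ := h
      refine ⟨c j, fun k hk _ hunique => ?_⟩
      by_cases hjk : j = k
      · rw [hjk]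
      · exact absurd ⟨j, hjk, hj.symm.trans hk, hjT⟩ hunique
    · exact ⟨Classical.arbitrary A, fun k hk hkT _ => absurd ⟨k, hk, hkT⟩ h⟩
  choose g hg using hex
  exact ⟨g, fun k y => hg (b k, y) k rfl⟩

lemma prob_le_mul_le {R : A → ℝ} (hR : IsPmf R) (r : A → ℝ) {σ : ℝ} (hσ : 0 ≤ σ) :
    prob r {a | r a ≤ σ * R a} ≤ σ := by
  have hmass : ∑ a, σ * R a = σ := by rw [← Finset.mul_sum, hR.2, mul_one]
  refine (Finset.sum_le_sum fun a _ => ?_).trans_eq hmass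
  by_cases h : a ∈ {a | r a ≤ σ * R a}
  · rw [Set.indicator_of_mem h, Pi.one_apply, mul_one]
    exact h
  · rw [Set.indicator_of_notMem h, mul_zero]
    exact mul_nonneg hσ (hR.1 a)

omit [Fintype A] [Fintype ι] [DecidableEq ι] in
lemma exists_encoder [Nonempty ι] {μ : X → ℝ} (hμ : IsPmf μ) {V : X → Y → ℝ} (hV : IsCondPmf V)
    (F : Set ((X × Y) × A)) {s : ℝ} (hs : 0 ≤ s) (c : ι → A) :
    ∃ k : X → ι, prob (jointLaw μ V) {z | (z, c (k z.1)) ∈ F} ≤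
      s + prob μ {x | ∀ j, s ≤ prob (V x) {y | ((x, y), c j) ∈ F}} := by
  have hex (x : X) : ∃ k, (∃ j, prob (V x) {y | ((x, y), c j) ∈ F} < s) →
      prob (V x) {y | ((x, y), c k) ∈ F} < s := by
    by_cases h : ∃ j, prob (V x) {y | ((x, y), c j) ∈ F} < s
    exacts [⟨h.choose, fun _ => h.choose_spec⟩, ⟨Classical.arbitrary ι, fun h' => absurd h' h⟩]
  choose k hk using hex
  refine ⟨k, ?_⟩
  rw [prob_jointLaw, prob, ← hμ.mean_const s, ← mean_add, hμ.mean_const]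
  refine mean_le_mean hμ.1 fun x _ => ?_
  by_cases hx : x ∈ {x | ∀ j, s ≤ prob (V x) {y | ((x, y), c j) ∈ F}}
  · rw [Set.indicator_of_mem hx, Pi.one_apply]
    exact ((hV x).prob_le_one _).trans (le_add_of_nonneg_left hs)
  · rw [Set.indicator_of_notMem hx, add_zero]
    have hx : ¬∀ j, s ≤ prob (V x) {y | ((x, y), c j) ∈ F} := hx
    push Not at hx
    exact (hk x hx).le

omit [DecidableEq ι] in
lemma prob_jointLaw_margX (q : X × Y → ℝ) (W : X → A → ℝ) (E : Set (X × A)) :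
    prob (jointLaw (margX q) W) E =
      prob (jointLaw q fun z => W z.1) {t | (t.1.1, t.2) ∈ E} := by
  rw [prob_jointLaw, prob_jointLaw, mean_margX]
  rfl

lemma prob_le_prob_le {μ : X → ℝ} (hμ : IsPmf μ) {V : X → Y → ℝ} (hV : IsCondPmf V)
    {W : X → A → ℝ} (hW : IsCondPmf W) (F : Set ((X × Y) × A)) {s : ℝ} (hs : 0 < s) :
    prob (jointLaw μ W) {z | s ≤ prob (V z.1) {y | ((z.1, y), z.2) ∈ F}} ≤
      prob (jointLaw (jointLaw μ V) fun z => W z.1) F / s := by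
  refine (prob_le_mean_div (isPmf_jointLaw hμ hW).1 (fun z => prob_nonneg (hV z.1).1 _)
    hs).trans_eq ?_
  rw [prob_jointLaw, mean_jointLaw, mean_jointLaw]
  congr 2 with x
  exact mean_comm (W x) (V x) _

lemma mean_sum_prob (r : Y → ℝ) {P : A → ℝ} (hP : IsPmf P) (T : Set (Y × A)) :
    mean (iidLaw P ι) (fun c => ∑ j, prob r {y | (y, c j) ∈ T}) =
      Fintype.card ι * prob (jointLaw r fun _ => P) T := by
  simp only [mean_sum, mean_iidLaw_apply hP (fun a => prob r {y | (y, a) ∈ T}), Finset.sum_const,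
    Finset.card_univ, nsmul_eq_mul, prob_jointLaw]
  exact congrArg _ (mean_comm P r _)

omit [DecidableEq ι] in
lemma exists_codebook [Nonempty ι] {q : X × Y → ℝ} (hq : IsPmf q) {W : X → A → ℝ}
    (hW : IsCondPmf W) {P : A → ℝ} (hP : IsPmf P) (F : Set ((X × Y) × A)) (T : Set (Y × A))
    {s K : ℝ} (hs : 0 < s) (hK : 0 < K) (m : ℕ) :
    ∃ (c : ι → A) (k : X → ι),
      prob q {z | (z, c (k z.1)) ∈ F} + (∑ j, prob (margY q) {y | (y, c j) ∈ T}) / m ≤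
        s + prob (jointLaw q fun z => W z.1) F / s +
        prob (jointLaw q fun z => W z.1) {t | K * P t.2 < W t.1.1 t.2} +
        Real.exp (-(Fintype.card ι / K)) +
        Fintype.card ι / m * prob (jointLaw (margY q) fun _ => P) T := by
  obtain ⟨V, hV, hVq⟩ := hq.exists_jointLaw_eq
  have hμ : IsPmf (margX q) := isPmf_margX hq
  set bad : X → Set A := fun x => {a | s ≤ prob (V x) {y | ((x, y), a) ∈ F}}
  have hmean : mean (iidLaw P ι) (fun c => prob (margX q) {x | ∀ j, c j ∈ bad x} +
      (∑ j, prob (margY q) {y | (y, c j) ∈ T}) / m) ≤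
        prob (jointLaw q fun z => W z.1) F / s +
        prob (jointLaw q fun z => W z.1) {t | K * P t.2 < W t.1.1 t.2} +
        Real.exp (-(Fintype.card ι / K)) +
        Fintype.card ι / m * prob (jointLaw (margY q) fun _ => P) T := by
    simp only [mean_add, div_eq_inv_mul (∑ _, _) (m : ℝ), mean_const_mul, mean_sum_prob _ hP]
    have hbad := prob_le_prob_le hμ hV hW F hs
    have hcover := mean_prob_uncovered_le (ι := ι) hμ hW hP bad hK
    rw [prob_jointLaw_margX q W {z | K * P z.2 < W z.1 z.2}] at hcover
    rw [hVq] at hbad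
    rw [← mul_assoc, ← div_eq_inv_mul]
    exact add_le_add_left (hcover.trans (add_le_add_left (add_le_add hbad le_rfl) _)) _
  obtain ⟨c, hc⟩ := (isPmf_iidLaw hP).exists_le_of_mean_le hmean
  obtain ⟨k, hk⟩ := exists_encoder hμ hV F hs.le c
  rw [hVq] at hk
  refine ⟨c, k, ?_⟩
  change prob (margX q) {x | ∀ j, s ≤ prob (V x) {y | ((x, y), c j) ∈ F}} + _ ≤ _ at hc
  linarith

omit [DecidableEq ι] in
-- The encoder sends the bin of a codeword jointly good with `x`; the decoder looks in that bin
-- for a codeword compatible with its side information `y`, as recorded by `T`.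
theorem exists_oneShot_code [Nonempty ι] {q : X × Y → ℝ} (hq : IsPmf q) {W : X → A → ℝ}
    (hW : IsCondPmf W) {P : A → ℝ} (hP : IsPmf P) (D : Set ((X × Y) × A)) (T : Set (Y × A))
    {s K : ℝ} (hs : 0 < s) (hK : 0 < K) (hm : 0 < m) :
    ∃ (f : X → Fin m) (g : Fin m × Y → A), prob q {z | (z, g (f z.1, z.2)) ∈ D} ≤
        s + (prob (jointLaw q fun z => W z.1) D +
          prob (jointLaw q fun z => W z.1) {t | (t.1.2, t.2) ∉ T}) / s +
        prob (jointLaw q fun z => W z.1) {t | K * P t.2 < W t.1.1 t.2} +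
        Real.exp (-(Fintype.card ι / K)) +
        Fintype.card ι / m * prob (jointLaw (margY q) fun _ => P) T := by
  have : Nonempty A := hP.nonempty
  set F : Set ((X × Y) × A) := D ∪ {t | (t.1.2, t.2) ∉ T}
  obtain ⟨c, k, hck⟩ := exists_codebook (ι := ι) hq hW hP F T hs hK m
  obtain ⟨b, hb⟩ := exists_bins hq.1 hm (fun z => k z.1) fun j => {z | (z.2, c j) ∈ T}
  obtain ⟨g, hg⟩ := exists_list_decoder b c T
  have hmarg (j : ι) : prob (margY q) {y | (y, c j) ∈ T} = prob q {z | (z.2, c j) ∈ T} :=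
    mean_margY q _
  have hF : prob (jointLaw q fun z => W z.1) F / s ≤ _ / s :=
    div_le_div_of_nonneg_right
      (prob_union_le (isPmf_jointLaw hq fun z => hW z.1).1 D {t | (t.1.2, t.2) ∉ T}) hs.le
  have hfail : prob q {z | (z, g (b (k z.1), z.2)) ∈ D} ≤ prob q {z | (z, c (k z.1)) ∈ F} +
      prob q {z | ∃ j, j ≠ k z.1 ∧ b j = b (k z.1) ∧ (z.2, c j) ∈ T} := by
    refine (prob_mono hq.1 fun z _ hz => ?_).trans (prob_union_le hq.1 _ _)
    by_contra h
    obtain ⟨hgood, hunique⟩ := not_or.1 h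
    obtain ⟨hD, hT⟩ := not_or.1 hgood
    have hz : (z, g (b (k z.1), z.2)) ∈ D := hz
    rw [hg (k z.1) z.2 (not_not.1 hT) hunique] at hz
    exact hD hz
  simp only [hmarg] at hck
  refine ⟨fun x => b (k x), g, ?_⟩
  linarith [show prob q {z | ∃ j, j ≠ k z.1 ∧ b j = b (k z.1) ∧ (z.2, c j) ∈ T} ≤ _ from hb]

end OneShot

section WynerZivCode

variable {X Y A : Type} [Fintype X] [Fintype Y] [Fintype A] {n : ℕ}

lemma prob_jointLaw_iid (q : X × Y → ℝ) (W : X → A → ℝ) (E : Set (Fin n → (X × Y) × A)) :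
    prob (jointLaw (iid q n) fun z (a : Fin n → A) => ∏ i, W (z.1 i) (a i))
        {t | (fun i => ((t.1.1 i, t.1.2 i), t.2 i)) ∈ E} =
      prob (iidLaw (jointLaw q fun z => W z.1) (Fin n)) E := by
  rw [← prob_comp_equiv (((Equiv.arrowProdEquivProdArrow (Fin n) (fun _ => X)
    fun _ => Y).symm.prodCongr (Equiv.refl (Fin n → A))).trans
      (Equiv.arrowProdEquivProdArrow (Fin n) (fun _ => X × Y) fun _ => A).symm)]
  refine congrArg (fun p => prob p _) (funext fun t => ?_)
  exact Finset.prod_mul_distrib.symm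

omit [Fintype Y] in
lemma margY_iid (q : X × Y → ℝ) (y : Fin n → Y) : margY (iid q n) y = ∏ i, margY q (y i) := by
  simp only [margY, iid, Fintype.prod_sum]

lemma isPmf_margYZ {p : (X × Y) × A → ℝ} (hp : IsPmf p) : IsPmf (margYZ p) := by
  refine ⟨fun b => Finset.sum_nonneg fun x _ => hp.1 _, ?_⟩
  have h := mean_margYZ p fun _ => 1
  rwa [hp.mean_const, mean, Finset.sum_congr rfl fun b _ => mul_one (margYZ p b)] at h

lemma exists_block_code {q : X × Y → ℝ} (hq : IsPmf q) {W : X → A → ℝ} (hW : IsCondPmf W)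
    {P : A → ℝ} (hP : IsPmf P) (D : Set (Fin n → (X × Y) × A)) {s K σ : ℝ} (hs : 0 < s)
    (hK : 0 < K) (hσ : 0 ≤ σ) {N m : ℕ} (hN : 0 < N) (hm : 0 < m) :
    ∃ (f : (Fin n → X) → Fin m) (g : Fin m × (Fin n → Y) → Fin n → A),
      prob (iid q n) {z | (fun i => ((z.1 i, z.2 i), g (f z.1, z.2) i)) ∈ D} ≤
        s + (prob (iidLaw (jointLaw q fun z => W z.1) (Fin n)) D +
          prob (iidLaw (jointLaw q fun z => W z.1) (Fin n))
            {t | σ * ∏ i, margYZ (jointLaw q fun z => W z.1) ((t i).1.2, (t i).2) <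
              ∏ i, margY q (t i).1.2 * P (t i).2}) / s +
        prob (iidLaw (jointLaw q fun z => W z.1) (Fin n))
          {t | K * ∏ i, P (t i).2 < ∏ i, W (t i).1.1 (t i).2} +
        Real.exp (-(N / K)) + N / m * σ := by
  have : Nonempty (Fin N) := ⟨⟨0, hN⟩⟩
  set J := jointLaw q fun z => W z.1
  have hJ : IsPmf J := isPmf_jointLaw hq fun z => hW z.1
  set Wn : (Fin n → X) → (Fin n → A) → ℝ := fun x a => ∏ i, W (x i) (a i)
  have hWn : IsCondPmf Wn := fun x =>
    ⟨fun a => Finset.prod_nonneg fun i _ => (hW (x i)).1 (a i), by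
      simp only [Wn, ← Fintype.prod_sum, (hW _).2, Finset.prod_const_one]⟩
  set R : (Fin n → Y) × (Fin n → A) → ℝ := fun b => ∏ i, margYZ J (b.1 i, b.2 i)
  have hR : IsPmf R := (isPmf_iidLaw (isPmf_margYZ hJ)).comp_equiv
    (Equiv.arrowProdEquivProdArrow (Fin n) (fun _ => Y) fun _ => A).symm
  set r : (Fin n → Y) × (Fin n → A) → ℝ := jointLaw (margY (iid q n)) fun _ => iidLaw P (Fin n)
  have hr (b : (Fin n → Y) × (Fin n → A)) : r b = ∏ i, margY q (b.1 i) * P (b.2 i) := by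
    rw [Finset.prod_mul_distrib, ← margY_iid]
    rfl
  obtain ⟨f, g, hfg⟩ := exists_oneShot_code (ι := Fin N) (isPmf_iid hq) hWn
    (isPmf_iidLaw (ι := Fin n) hP) {t | (fun i => ((t.1.1 i, t.1.2 i), t.2 i)) ∈ D}
    {b | r b ≤ σ * R b} hs hK hm
  refine ⟨f, g, hfg.trans ?_⟩
  have hincompatible : {t : ((Fin n → X) × (Fin n → Y)) × (Fin n → A) |
      (t.1.2, t.2) ∉ {b | r b ≤ σ * R b}} =
      {t | (fun i => ((t.1.1 i, t.1.2 i), t.2 i)) ∈ {t : Fin n → (X × Y) × A |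
        σ * ∏ i, margYZ J ((t i).1.2, (t i).2) < ∏ i, margY q (t i).1.2 * P (t i).2}} := by
    ext t
    change ¬r (t.1.2, t.2) ≤ σ * R (t.1.2, t.2) ↔ _
    rw [hr, not_le]
    rfl
  have hdense := prob_jointLaw_iid q W {t : Fin n → (X × Y) × A |
    K * ∏ i, P (t i).2 < ∏ i, W (t i).1.1 (t i).2}
  rw [hincompatible, prob_jointLaw_iid, prob_jointLaw_iid, Fintype.card_fin, ← hdense]
  gcongr
  · rfl
  · exact prob_le_mul_le hR r hσ

lemma condInfo_jointLaw_fst {q : X × Y → ℝ} (hq : IsPmf q) {W : X → A → ℝ} (hW : IsCondPmf W)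
    {P : A → ℝ} (hP : ∀ t : (X × Y) × A, 0 < jointLaw q (fun z => W z.1) t → 0 < P t.2) :
    condInfo (jointLaw q fun z => W z.1) =
      mean (jointLaw q fun z => W z.1) (fun t => Real.logb 2 (W t.1.1 t.2 / P t.2)) +
      mean (jointLaw q fun z => W z.1) (fun t => Real.logb 2
        (margY q t.1.2 * P t.2 / margYZ (jointLaw q fun z => W z.1) (t.1.2, t.2))) := by
  set J := jointLaw q fun z => W z.1
  have hJ : ∀ t, 0 ≤ J t := (isPmf_jointLaw hq fun z => hW z.1).1
  rw [condInfo_eq_mean hJ, ← mean_add]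
  refine mean_congr hJ fun t ht => ?_
  have hq_pos : 0 < q t.1 := pos_of_mul_pos_left ht ((hW _).1 _)
  have hW_pos : 0 < W t.1.1 t.2 := pos_of_mul_pos_right ht (hq.1 _)
  have hYZ : 0 < margYZ J (t.1.2, t.2) := ht.trans_le (le_margYZ hJ t)
  have hY : 0 < margY q t.1.2 := hq_pos.trans_le (le_margY hq.1 t.1)
  have hPt := hP t ht
  rw [← Real.logb_mul (by positivity) (by positivity), condInfoRatio,
    margX_jointLaw q fun z => hW z.1]
  simp only [J, jointLaw]
  congr 1
  field_simp

lemma eventually_rpow_neg_le {γ η : ℝ} (hγ : 0 < γ) (hη : 0 < η) :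
    ∀ᶠ n : ℕ in Filter.atTop, (2 : ℝ) ^ (-(n * γ)) ≤ η := by
  have hlim := tendsto_pow_atTop_nhds_zero_of_lt_one (r := (2 : ℝ) ^ (-γ)) (by positivity)
    (Real.rpow_lt_one_of_one_lt_of_neg one_lt_two (neg_lt_zero.2 hγ))
  filter_upwards [hlim.eventually_le_const hη] with n hn
  rwa [← Real.rpow_mul_natCast zero_le_two, neg_mul, mul_comm] at hn

-- A codebook at rate `2γ` above `a` meets the covering requirement, and `m` bins at rate `4γ` above
-- `a + b` meet the packing requirement.
lemma exp_add_ceil_div_mul_le {a b γ : ℝ} (ha : 0 ≤ a) (hγ : 0 ≤ γ) {n m : ℕ}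
    (hm : (2 : ℝ) ^ (n * (a + b + 4 * γ)) ≤ m) :
    Real.exp (-(⌈(2 : ℝ) ^ (n * (a + 2 * γ))⌉₊ / (2 : ℝ) ^ (n * (a + γ)))) +
      ⌈(2 : ℝ) ^ (n * (a + 2 * γ))⌉₊ / m * (2 : ℝ) ^ (n * (b + γ)) ≤
        3 * (2 : ℝ) ^ (-(n * γ)) := by
  set L : ℝ := (2 : ℝ) ^ (n * (a + 2 * γ))
  have hL : 1 ≤ L := Real.one_le_rpow one_le_two (by positivity)
  have hcover : Real.exp (-(⌈L⌉₊ / (2 : ℝ) ^ (n * (a + γ)))) ≤ (2 : ℝ) ^ (-(n * γ)) := by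
    have hx : (2 : ℝ) ^ (n * γ) ≤ ⌈L⌉₊ / (2 : ℝ) ^ (n * (a + γ)) := by
      rw [le_div_iff₀ (by positivity), ← Real.rpow_add two_pos]
      exact (congrArg _ (by ring)).trans_le (Nat.le_ceil L)
    rw [Real.exp_neg, Real.rpow_neg zero_le_two]
    gcongr
    linarith [Real.add_one_le_exp (⌈L⌉₊ / (2 : ℝ) ^ (n * (a + γ)))]
  have hpack : ⌈L⌉₊ / m * (2 : ℝ) ^ (n * (b + γ)) ≤ 2 * (2 : ℝ) ^ (-(n * γ)) :=
    calc ⌈L⌉₊ / m * (2 : ℝ) ^ (n * (b + γ))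
        ≤ 2 * L / (2 : ℝ) ^ (n * (a + b + 4 * γ)) * (2 : ℝ) ^ (n * (b + γ)) := by
          gcongr
          linarith [Nat.ceil_lt_add_one (zero_le_one.trans hL)]
      _ = 2 * (2 : ℝ) ^ (-(n * γ)) := by
          rw [mul_div_assoc, ← Real.rpow_sub two_pos, mul_assoc, ← Real.rpow_add two_pos]
          congr 2
          ring
  linarith

lemma mean_logb_div_margY_nonneg {q : X × Y → ℝ} (hq : IsPmf q) {W : X → A → ℝ}
    (hW : IsCondPmf W) : 0 ≤ mean (jointLaw q fun z => W z.1) fun t =>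
      Real.logb 2 (W t.1.1 t.2 / margY (jointLaw q fun z => W z.1) t.2) := by
  set J := jointLaw q fun z => W z.1
  have hJ : IsPmf J := isPmf_jointLaw hq fun z => hW z.1
  have hprod : IsPmf (jointLaw q fun _ => margY J) := isPmf_jointLaw hq fun _ => isPmf_margY hJ
  have hq_pos {t : (X × Y) × A} (ht : 0 < J t) : 0 < q t.1 := pos_of_mul_pos_left ht ((hW _).1 _)
  refine (hJ.mean_logb_div_nonneg hprod.1 hprod.2.le fun t ht =>
    mul_pos (hq_pos ht) (ht.trans_le (le_margY hJ.1 t))).trans_eq (mean_congr hJ.1 fun t ht => ?_)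
  simp only [J, jointLaw]
  rw [mul_div_mul_left _ _ (hq_pos ht).ne']

open Filter in
theorem eventually_exists_block_code {q : X × Y → ℝ} (hq : IsPmf q) {W : X → A → ℝ}
    (hW : IsCondPmf W) (h : (X × Y) × A → ℝ) {γ ε η : ℝ} (hγ : 0 < γ) (hε : 0 < ε)
    (hη : 0 < η) : ∀ᶠ n : ℕ in atTop, ∀ m : ℕ,
      (2 : ℝ) ^ (n * (condInfo (jointLaw q fun z => W z.1) + ε)) ≤ m →
      ∃ (f : (Fin n → X) → Fin m) (g : Fin m × (Fin n → Y) → Fin n → A),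
        prob (iid q n) {z | n * (mean (jointLaw q fun z => W z.1) h + γ) ≤
          ∑ i, h ((z.1 i, z.2 i), g (f z.1, z.2) i)} ≤ η := by
  set J := jointLaw q fun z => W z.1
  have hJ : IsPmf J := isPmf_jointLaw hq fun z => hW z.1
  set P := margY J
  have hP_pos (t : (X × Y) × A) (ht : 0 < J t) : 0 < P t.2 := ht.trans_le (le_margY hJ.1 t)
  have hW_pos (t : (X × Y) × A) (ht : 0 < J t) : 0 < W t.1.1 t.2 :=
    pos_of_mul_pos_right ht (hq.1 _)
  have hYZ_pos (t : (X × Y) × A) (ht : 0 < J t) : 0 < margYZ J (t.1.2, t.2) :=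
    ht.trans_le (le_margYZ hJ.1 t)
  have hYP_pos (t : (X × Y) × A) (ht : 0 < J t) : 0 < margY q t.1.2 * P t.2 :=
    mul_pos ((pos_of_mul_pos_left ht ((hW _).1 _)).trans_le (le_margY hq.1 t.1)) (hP_pos t ht)
  set a := mean J fun t => Real.logb 2 (W t.1.1 t.2 / P t.2)
  set b := mean J fun t => Real.logb 2 (margY q t.1.2 * P t.2 / margYZ J (t.1.2, t.2))
  have hcondInfo : condInfo J = a + b := condInfo_jointLaw_fst hq hW hP_pos
  have ha : 0 ≤ a := mean_logb_div_margY_nonneg hq hW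
  obtain ⟨δ, rfl⟩ : ∃ δ, ε = 4 * δ := ⟨ε / 4, by ring⟩
  obtain ⟨s, rfl⟩ : ∃ s, η = 5 * s := ⟨η / 5, by ring⟩
  have hδ : 0 < δ := by linarith
  have hs : 0 < s := by linarith
  filter_upwards [eventually_prob_iidLaw_sum_le hJ h hγ (mul_pos hs hs),
    eventually_prob_rpow_mul_prod_lt_le hJ hYP_pos hYZ_pos hδ (mul_pos hs hs),
    eventually_prob_rpow_mul_prod_lt_le hJ hW_pos hP_pos hδ hs,
    eventually_rpow_neg_le hδ (div_pos hs three_pos)]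
    with n hdistortion hpacking hcovering hrate m hm
  have hm0 : 0 < m := Nat.cast_pos.1 (lt_of_lt_of_le (by positivity) hm)
  rw [hcondInfo] at hm
  have hexponents := exp_add_ceil_div_mul_le ha hδ.le hm
  obtain ⟨f, g, hfg⟩ := exists_block_code (N := ⌈(2 : ℝ) ^ (n * (a + 2 * δ))⌉₊)
    (K := (2 : ℝ) ^ (n * (a + δ))) (σ := (2 : ℝ) ^ (n * (b + δ))) hq hW (isPmf_margY hJ)
    {t | n * (mean J h + γ) ≤ ∑ i, h (t i)} hs (by positivity) (by positivity)
    (Nat.ceil_pos.2 (by positivity)) hm0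
  refine ⟨f, g, hfg.trans ?_⟩
  have hdecoding := (div_le_div_of_nonneg_right (add_le_add hdistortion hpacking) hs.le).trans_eq
    (by field_simp; ring : (s * s + s * s) / s = 2 * s)
  linarith

end WynerZivCode

section WynerZivRates

variable {𝒳 𝒴 C A : Type} [Fintype 𝒳] [Fintype 𝒴] [Fintype A]

/-- `r` is an achievable Wyner–Ziv rate at distortion `d`: the encoder sees only `X`, the decoder
has the side information `Y`. A code must exist at every large blocklength and for every large
enough message set, so that two such codes can share both. -/
def WZAchievable (q : 𝒳 × 𝒴 → ℝ) (δ : 𝒳 → C → ℝ) (d r : ℝ) : Prop :=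
  ∀ ε > 0, ∀ᶠ n : ℕ in Filter.atTop, ∀ m : ℕ, (2 : ℝ) ^ (n * (r + ε)) ≤ m →
    ∃ (f : (Fin n → 𝒳) → Fin m) (g : Fin m × (Fin n → 𝒴) → Fin n → C),
      Delta1 q δ (f ∘ Prod.fst) g ≤ d + ε

theorem wzAchievable_condInfo {q : 𝒳 × 𝒴 → ℝ} (hq : IsPmf q) (δ : 𝒳 → C → ℝ) {W : 𝒳 → A → ℝ}
    (hW : IsCondPmf W) (π : A × 𝒴 → C) {d : ℝ}
    (hd : mean (jointLaw q fun z => W z.1) (fun t => δ t.1.1 (π (t.2, t.1.2))) ≤ d) :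
    WZAchievable q δ d (condInfo (jointLaw q fun z => W z.1)) := by
  intro ε hε
  set h : (𝒳 × 𝒴) × A → ℝ := fun t => δ t.1.1 (π (t.2, t.1.2))
  obtain ⟨b, hb⟩ := Finite.exists_le fun t => h t - d
  set B := max b 0
  have hB : 0 ≤ B := le_max_right b 0
  have hh (t : (𝒳 × 𝒴) × A) : h t ≤ d + ε / 2 + B := by linarith [hb t, le_max_left b 0]
  filter_upwards [eventually_exists_block_code hq hW h (half_pos hε) hε
    (by positivity : 0 < ε / (2 * (B + 1))), Filter.eventually_gt_atTop 0] with n hcode hn m hm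
  obtain ⟨f, g, hbad⟩ := hcode m hm
  have hn' : (0 : ℝ) < n := Nat.cast_pos.2 hn
  set total : (Fin n → 𝒳) × (Fin n → 𝒴) → ℝ := fun z => ∑ i, h ((z.1 i, z.2 i), g (f z.1, z.2) i)
  have htotal (z) : (n : ℝ)⁻¹ * total z ≤ d + ε / 2 + B := by
    rw [inv_mul_le_iff₀ hn']
    calc total z ≤ ∑ _i : Fin n, (d + ε / 2 + B) := Finset.sum_le_sum fun i _ => hh _
      _ = n * (d + ε / 2 + B) := by rw [Finset.sum_const, Finset.card_fin, nsmul_eq_mul]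
  have hgood {z} (hz : z ∉ {z | n * (mean (jointLaw q fun z => W z.1) h + ε / 2) ≤ total z}) :
      (n : ℝ)⁻¹ * total z ≤ d + ε / 2 := by
    rw [inv_mul_le_iff₀ hn']
    refine (not_le.1 hz).le.trans ?_
    gcongr
  refine ⟨f, fun jy i => π (g jy i, jy.2 i), ?_⟩
  calc Delta1 q δ (f ∘ Prod.fst) (fun jy i => π (g jy i, jy.2 i))
      ≤ d + ε / 2 + B * prob (iid q n)
          {z | n * (mean (jointLaw q fun z => W z.1) h + ε / 2) ≤ total z} :=
        (isPmf_iid hq).mean_le_add_mul_prob (fun z _ => htotal z) fun _ hz => hgood hz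
    _ ≤ d + ε / 2 + B * (ε / (2 * (B + 1))) := by gcongr
    _ = d + ε - ε / (2 * (B + 1)) := by field_simp; ring
    _ ≤ d + ε := sub_le_self _ (by positivity)

lemma markov_iff_exists_kernel {p : A × 𝒳 × 𝒴 → ℝ} (hp : IsPmf p) {q : 𝒳 × 𝒴 → ℝ}
    (hpq : ∀ x y, ∑ a, p (a, x, y) = q (x, y)) :
    Markov p ↔ ∃ W : 𝒳 → A → ℝ, IsCondPmf W ∧ ∀ a x y, p (a, x, y) = q (x, y) * W x a := by
  have hsum (x : 𝒳) : ∑ a, ∑ y, p (a, x, y) = margX q x := by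
    rw [Finset.sum_comm]
    simp only [hpq, margX]
  constructor
  · intro hM
    have hXA : IsPmf fun z : 𝒳 × A => ∑ y, p (z.2, z.1, y) := by
      refine ⟨fun z => Finset.sum_nonneg fun y _ => hp.1 _, ?_⟩
      rw [← hp.2]
      simp only [Fintype.sum_prod_type]
      exact Finset.sum_comm
    obtain ⟨W, hW, hWp⟩ := hXA.exists_jointLaw_eq
    have hkernel (a : A) (x : 𝒳) : ∑ y, p (a, x, y) = margX q x * W x a := by
      rw [← hsum]
      exact (congrFun hWp (x, a)).symm
    refine ⟨W, hW, fun a x y => ?_⟩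
    have hMarkov := hM a x y
    rw [hsum, hpq, hkernel] at hMarkov
    by_cases h : margX q x = 0
    · have hp_zero (a : A) : p (a, x, y) = 0 :=
        (Finset.sum_eq_zero_iff_of_nonneg fun y _ => hp.1 (a, x, y)).1
          (by rw [hkernel, h, zero_mul]) y (Finset.mem_univ y)
      rw [hp_zero, ← hpq, Finset.sum_eq_zero fun a _ => hp_zero a, zero_mul]
    · exact mul_right_cancel₀ h (by linarith)
  · rintro ⟨W, -, hWp⟩ a x y
    rw [hsum, hpq]
    simp only [hWp, ← Finset.sum_mul]
    rw [margX]
    ring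

/-- The rates over which `wzRD` minimises, with `p_{AXY}` written as `q_{XY} W_{A|X}`. -/
def wzRates (q : 𝒳 × 𝒴 → ℝ) (δ : 𝒳 → C → ℝ) (d : ℝ) : Set ℝ :=
  {r | ∃ W : 𝒳 → Fin (Fintype.card 𝒳 + 1) → ℝ, IsCondPmf W ∧
    (∃ π : Fin (Fintype.card 𝒳 + 1) × 𝒴 → C,
      mean (jointLaw q fun z => W z.1) (fun t => δ t.1.1 (π (t.2, t.1.2))) ≤ d) ∧
    r = condInfo (jointLaw q fun z => W z.1)}

lemma wzRD_eq_sInf {q : 𝒳 × 𝒴 → ℝ} (hq : IsPmf q) (δ : 𝒳 → C → ℝ) (d : ℝ) :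
    wzRD q δ d = sInf (wzRates q δ d) := by
  have hmean (W : 𝒳 → Fin (Fintype.card 𝒳 + 1) → ℝ) (π : Fin (Fintype.card 𝒳 + 1) × 𝒴 → C) :
      mean (jointLaw q fun z => W z.1) (fun t => δ t.1.1 (π (t.2, t.1.2))) =
        ∑ a, ∑ x, ∑ y, q (x, y) * W x a * δ x (π (a, y)) := by
    simp only [mean, jointLaw, Fintype.sum_prod_type_right]
    refine Finset.sum_congr rfl fun a _ => Finset.sum_comm
  refine congrArg sInf (Set.ext fun r => ⟨?_, ?_⟩)
  · rintro ⟨p, hp, hpq, hM, ⟨π, hπ⟩, rfl⟩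
    obtain ⟨W, hW, hWp⟩ := (markov_iff_exists_kernel hp hpq).1 hM
    simp only [hWp] at hπ ⊢
    exact ⟨W, hW, ⟨π, (hmean W π).trans_le hπ⟩, rfl⟩
  · rintro ⟨W, hW, ⟨π, hπ⟩, rfl⟩
    have hp : IsPmf fun t : Fin (Fintype.card 𝒳 + 1) × 𝒳 × 𝒴 => q t.2 * W t.2.1 t.1 :=
      (isPmf_jointLaw hq fun z => hW z.1).comp_equiv (Equiv.prodComm _ _)
    have hpq (x : 𝒳) (y : 𝒴) : ∑ a, q (x, y) * W x a = q (x, y) := by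
      rw [← Finset.mul_sum, (hW x).2, mul_one]
    exact ⟨_, hp, hpq, (markov_iff_exists_kernel hp hpq).2 ⟨W, hW, fun _ _ _ => rfl⟩,
      ⟨π, (hmean W π).symm.trans_le hπ⟩, rfl⟩

lemma wzRates_nonneg {q : 𝒳 × 𝒴 → ℝ} (hq : IsPmf q) {δ : 𝒳 → C → ℝ} {d r : ℝ}
    (hr : r ∈ wzRates q δ d) : 0 ≤ r := by
  obtain ⟨W, hW, -, rfl⟩ := hr
  exact condInfo_nonneg (isPmf_jointLaw hq fun z => hW z.1)

lemma wzAchievable_of_mem_wzRates {q : 𝒳 × 𝒴 → ℝ} (hq : IsPmf q) {δ : 𝒳 → C → ℝ} {d r : ℝ}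
    (hr : r ∈ wzRates q δ d) : WZAchievable q δ d r := by
  obtain ⟨W, hW, ⟨π, hπ⟩, rfl⟩ := hr
  exact wzAchievable_condInfo hq δ hW π hπ

-- The auxiliary letter reveals `x`, and the decoder outputs `c x`.
lemma wzRates_nonempty {q : 𝒳 × 𝒴 → ℝ} (hq : IsPmf q) {δ : 𝒳 → C → ℝ} {c : 𝒳 → C} {d : ℝ}
    (hd : mean (margX q) (fun x => δ x (c x)) ≤ d) : (wzRates q δ d).Nonempty := by
  obtain ⟨x₀, -⟩ := hq.nonempty
  have : Nonempty 𝒳 := ⟨x₀⟩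
  obtain ⟨e, he⟩ : ∃ e : 𝒳 → Fin (Fintype.card 𝒳 + 1), Function.Injective e :=
    ⟨_, (Fin.castSucc_injective _).comp (Fintype.equivFin 𝒳).injective⟩
  refine ⟨_, fun x => Pi.single (e x) 1, fun x => isPmf_single (e x),
    ⟨fun t => c (Function.invFun e t.1), ?_⟩, rfl⟩
  rw [mean_jointLaw]
  simp only [mean_single_left, Function.leftInverse_invFun he _]
  rwa [mean_margX] at hd

end WynerZivRates

section CompressLinear

variable {𝒳 𝒴 Xh Yh : Type} [Fintype 𝒳] [Fintype 𝒴]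

lemma exists_nat_rpow_le_and_logb_le {x : ℝ} (hx : 0 ≤ x) :
    ∃ m : ℕ, (2 : ℝ) ^ x ≤ m ∧ Real.logb 2 m ≤ x + 1 := by
  have hone : 1 ≤ (2 : ℝ) ^ x := Real.one_le_rpow one_le_two hx
  refine ⟨⌈(2 : ℝ) ^ x⌉₊, Nat.le_ceil _, ?_⟩
  rw [Real.logb_le_iff_le_rpow one_lt_two (Nat.cast_pos.2 (Nat.ceil_pos.2 (by positivity))),
    Real.rpow_add_one two_ne_zero, mul_comm]
  exact Nat.ceil_le_two_mul (by linarith)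

theorem rdAchievable_max {q : 𝒳 × 𝒴 → ℝ} {δ1 : 𝒳 → Xh → ℝ} {δ2 : 𝒴 → Yh → ℝ} {d1 d2 r1 r2 : ℝ}
    (hr1 : 0 ≤ r1) (h1 : WZAchievable q δ1 d1 r1) (h2 : WZAchievable (swap q) δ2 d2 r2) :
    RDAchievable q δ1 δ2 d1 d2 (max r1 r2) := by
  intro ε hε
  obtain ⟨n, h1n, h2n, hn, hnε⟩ := ((h1 (ε / 2) (half_pos hε)).and <|
    (h2 (ε / 2) (half_pos hε)).and <| (Filter.eventually_gt_atTop 0).and <|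
    (tendsto_natCast_atTop_atTop.atTop_mul_const (half_pos hε)).eventually_ge_atTop 1).exists
  have hn' : (0 : ℝ) < n := Nat.cast_pos.2 hn
  set r := max r1 r2
  have hr : 0 ≤ r := hr1.trans (le_max_left r1 r2)
  obtain ⟨m, hm, hlogm⟩ :=
    exists_nat_rpow_le_and_logb_le (mul_nonneg hn'.le (add_nonneg hr (half_pos hε).le))
  have : NeZero m := ⟨fun h => by
    rw [h, Nat.cast_zero] at hm
    exact hm.not_gt (by positivity)⟩
  have hm_of_le {s : ℝ} (hs : s ≤ r) : (2 : ℝ) ^ (n * (s + ε / 2)) ≤ m :=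
    (Real.rpow_le_rpow_of_exponent_le one_le_two (by gcongr)).trans hm
  obtain ⟨f1, g1, hd1⟩ := h1n m (hm_of_le (le_max_left r1 r2))
  obtain ⟨f2, g2, hd2⟩ := h2n m (hm_of_le (le_max_right r1 r2))
  refine ⟨n, m, fun xy => f1 xy.1 + f2 xy.2, fun jy => g1 (jy.1 - f2 jy.2, jy.2),
    fun jx => g2 (jx.1 - f1 jx.2, jx.2), hn, ?_, ?_, ?_⟩
  · rw [div_le_iff₀ hn']
    linarith
  · refine le_trans (le_of_eq ?_) (hd1.trans (add_le_add_right (half_le_self hε.le) d1))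
    simp only [Delta1, add_sub_cancel_right, Function.comp_apply]
  · rw [← Delta1_swap]
    refine le_trans (le_of_eq ?_) (hd2.trans (add_le_add_right (half_le_self hε.le) d2))
    simp only [Delta1, add_sub_cancel_left, Function.comp_apply, Prod.fst_swap, Prod.snd_swap]

end CompressLinear

end TWR

open TWR in
theorem rd_sandwich_general
    {𝒳 𝒴 Xh Yh : Type} [Fintype 𝒳] [Fintype 𝒴] [Fintype Xh] [Fintype Yh]
    {q : 𝒳 × 𝒴 → ℝ} (hq : IsPmf q) {δ1 : 𝒳 → Xh → ℝ} {δ2 : 𝒴 → Yh → ℝ} {d1 d2 : ℝ}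
    (hd1 : ∃ c : 𝒳 → Xh, ∑ x, margX q x * δ1 x (c x) ≤ d1)
    (hd2 : ∃ c : 𝒴 → Yh, ∑ y, margY q y * δ2 y (c y) ≤ d2) :
    max (condRD q δ1 d1) (condRD (swap q) δ2 d2) ≤ RD q δ1 δ2 d1 d2 ∧
    RD q δ1 δ2 d1 d2 ≤ max (wzRD q δ1 d1) (wzRD (swap q) δ2 d2) := by
  have hq' : IsPmf (swap q) := isPmf_swap hq
  have hne1 : (wzRates q δ1 d1).Nonempty := wzRates_nonempty hq hd1.choose_spec
  have hne2 : (wzRates (swap q) δ2 d2).Nonempty := wzRates_nonempty hq' hd2.choose_spec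
  have hmax {r1 r2 : ℝ} (h1 : r1 ∈ wzRates q δ1 d1) (h2 : r2 ∈ wzRates (swap q) δ2 d2) :
      0 ≤ max r1 r2 ∧ RDAchievable q δ1 δ2 d1 d2 (max r1 r2) :=
    ⟨(wzRates_nonneg hq h1).trans (le_max_left r1 r2), rdAchievable_max (wzRates_nonneg hq h1)
      (wzAchievable_of_mem_wzRates hq h1) (wzAchievable_of_mem_wzRates hq' h2)⟩
  constructor
  · exact le_csInf ⟨_, hmax hne1.some_mem hne2.some_mem⟩ fun r hr =>
      max_le (condRD_le_of_rdAchievable hq hr.2) (condRD_le_of_rdAchievable hq' hr.2.swap)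
  · rw [wzRD_eq_sInf hq, wzRD_eq_sInf hq']
    by_contra! hlt
    obtain ⟨r1, h1, hlt1⟩ := exists_lt_of_csInf_lt hne1 ((le_max_left _ _).trans_lt hlt)
    obtain ⟨r2, h2, hlt2⟩ := exists_lt_of_csInf_lt hne2 ((le_max_right _ _).trans_lt hlt)
    exact (max_lt hlt1 hlt2).not_ge (csInf_le ⟨0, fun _ hr => hr.1⟩ (hmax h1 h2))

open TWR in
/-- Theorem 8, first part: the RD function is sandwiched
between the cut-set lower bound and the compress-linear upper bound. -/
theorem rd_sandwich
    {𝒳 𝒴 Xh Yh : Type} [Fintype 𝒳] [Fintype 𝒴] [Fintype Xh] [Fintype Yh]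
    (q : 𝒳 × 𝒴 → ℝ) (hq : IsPmf q)
    (δ1 : 𝒳 → Xh → ℝ) (δ2 : 𝒴 → Yh → ℝ) (d1max d2max : ℝ)
    (hδ1 : ∀ x xh, 0 ≤ δ1 x xh ∧ δ1 x xh ≤ d1max)
    (hδ2 : ∀ y yh, 0 ≤ δ2 y yh ∧ δ2 y yh ≤ d2max)
    (hδ1n : ∀ x, ∃ xh, δ1 x xh = 0) (hδ2n : ∀ y, ∃ yh, δ2 y yh = 0)
    (d1 d2 : ℝ) (hd1 : 0 ≤ d1) (hd2 : 0 ≤ d2) :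
    max (condRD q δ1 d1) (condRD (swap q) δ2 d2) ≤ RD q δ1 δ2 d1 d2 ∧
    RD q δ1 δ2 d1 d2 ≤ max (wzRD q δ1 d1) (wzRD (swap q) δ2 d2) := by
  choose c1 hc1 using hδ1n
  choose c2 hc2 using hδ2n
  exact rd_sandwich_general hq ⟨c1, by simpa [hc1]⟩ ⟨c2, by simpa [hc2]⟩
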